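/- arXiv:0901.3995 — 2 statements merged into one kernel-verified Lean document; each statement's English description precedes it below -/
import Mathlib

section
/- For n > 0 set μ = 3/n and consider the oscillatory-component equation φ''' + 3(μ−1)φ'' + (3μ²−6μ+2)φ' + μ(μ−1)(μ−2)φ + |φ|^{−n}φ = 0. There exists a number n_h with 3/2 < n_h < 9/(3+√3) = 1.9019238... such that for every n ∈ (0, n_h) this equation admits a nonconstant periodic solution of changing sign (φ of class C² with φ'' locally absolutely continuous, satisfying the equation at every s where φ(s) ≠ 0). -/
open MeasureTheory intervalIntegral

/-- `φ` is a solution of the oscillatory-component equation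
`φ''' + 3(μ-1)φ'' + (3μ²-6μ+2)φ' + μ(μ-1)(μ-2)φ + |φ|^{-n}φ = 0` with `μ = 3/n`:
`φ` is `C²`, `φ''` is locally absolutely continuous (expressed via the fundamental
theorem of calculus for its a.e. derivative `φ'''`), and the equation holds wherever
`φ ≠ 0`. -/
def IsOscSol (n : ℝ) (φ : ℝ → ℝ) : Prop :=
  ContDiff ℝ 2 φ ∧
  (∀ a b : ℝ, deriv (deriv φ) b - deriv (deriv φ) a
      = ∫ s in a..b, deriv (deriv (deriv φ)) s) ∧
  (∀ s : ℝ, φ s ≠ 0 →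
    deriv (deriv (deriv φ)) s + 3 * (3 / n - 1) * deriv (deriv φ) s
      + (3 * (3 / n) ^ 2 - 6 * (3 / n) + 2) * deriv φ s
      + (3 / n) * (3 / n - 1) * (3 / n - 2) * φ s
      + |φ s| ^ (-n) * φ s = 0)

/-!
Writing `φ(s) = e^{-μ(s+σ)} F(e^{s+σ} - e^σ)`, the linear part of the equation factors as
`(D + μ)(D + μ - 1)(D + μ - 2)` and the equation becomes `-F''' = F ^ (1 - n)` where `F > 0`. A
positive arch of `φ` that extends antiperiodically thus amounts to a positive solution `F` on
`(0, 1)` with `F(0) = F(1) = 0`, `F'(1) = -a F'(0)` and `F''(1) = -a^k F''(0)`, where `a > 1` is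
free and `k = (3 - 2n) / (3 - n)`.

Put `a = (θ + 1) / θ` and `p = 1 - n`. The first three conditions are encoded in a positive Green's
kernel, comparable to `x(1 - x) t(1 - t)`, and as `|p| < 1` the resulting integral equation is a
contraction in the sup metric on `log (F / (x(1 - x)))`, whose fixed point is log-Lipschitz in
`log θ`. The last condition is then one scalar equation in `θ`, solved by the intermediate value
theorem: its defect is negative for large `θ`. For `p > -1/2` it is positive for small `θ` because
`k > 0` and so `a^k → ∞`. For `-3/4 ≤ p ≤ -1/2` the mass of `F ^ p` blows up as `θ → 0` while its
first moment stays bounded, and this makes the defect positive, at one `θ` serving all such `p`, as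
soon as `a^k ≥ 1/2`; for this fixed `a` that leaves room for `n` beyond `3/2`.
-/

namespace ThinFilm

open Set Filter Topology Function

section Antiperiodic

variable {τ : ℝ}

/-- The extension with antiperiod `τ` of the restriction of `f` to `[0, τ)`. -/
noncomputable def antiperiodicExtension (τ : ℝ) (f : ℝ → ℝ) (s : ℝ) : ℝ :=
  (-1) ^ ⌊s / τ⌋ * f (s - ⌊s / τ⌋ * τ)

lemma antiperiodic_antiperiodicExtension (hτ : τ ≠ 0) (f : ℝ → ℝ) :
    Antiperiodic (antiperiodicExtension τ f) τ := by
  intro s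
  have hfloor : ⌊(s + τ) / τ⌋ = ⌊s / τ⌋ + 1 := by
    rw [add_div, div_self hτ, Int.floor_add_one]
  have hmod : s + τ - (⌊s / τ⌋ + 1) * τ = s - ⌊s / τ⌋ * τ := by ring
  simp [antiperiodicExtension, hfloor, zpow_add₀, hmod]

lemma antiperiodicExtension_eqOn (f : ℝ → ℝ) :
    EqOn (antiperiodicExtension τ f) f (Ico 0 τ) := by
  intro s hs
  have hτ : 0 < τ := hs.1.trans_lt hs.2
  have hfloor : ⌊s / τ⌋ = 0 :=
    Int.floor_eq_zero_iff.2 ⟨div_nonneg hs.1 hτ.le, (div_lt_one hτ).2 hs.2⟩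
  simp [antiperiodicExtension, hfloor]

lemma intervalIntegrable_antiperiodicExtension (hτ : 0 < τ) {f : ℝ → ℝ}
    (hf : IntervalIntegrable f volume 0 τ) (a b : ℝ) :
    IntervalIntegrable (antiperiodicExtension τ f) volume a b := by
  have hanti := antiperiodic_antiperiodicExtension hτ.ne' f
  have hfirst : IntervalIntegrable (antiperiodicExtension τ f) volume 0 τ := by
    refine hf.congr_ae ?_
    rw [uIoc_of_le hτ.le, ← restrict_Ico_eq_restrict_Ioc]
    filter_upwards [self_mem_ae_restrict measurableSet_Ico] with s hs
    exact (antiperiodicExtension_eqOn f hs).symm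
  have hsecond : IntervalIntegrable (antiperiodicExtension τ f) volume τ (2 * τ) := by
    have hshift := (hfirst.comp_sub_right τ).neg
    rw [zero_add, ← two_mul] at hshift
    refine hshift.congr_ae (Eventually.of_forall fun s => ?_)
    simp [hanti.sub_eq s]
  exact hanti.periodic_two_mul.intervalIntegrable₀ (by positivity) (hfirst.trans hsecond) a b

lemma antiperiodic_deriv {f : ℝ → ℝ} (hf : Antiperiodic f τ) : Antiperiodic (deriv f) τ := by
  intro s
  rw [← deriv_comp_add_const, funext hf, deriv.fun_neg]

lemma antiperiodic_const_add_integral {ψ : ℝ → ℝ} {c : ℝ} (hψ : Antiperiodic ψ τ)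
    (hint : ∀ a b, IntervalIntegrable ψ volume a b) (hc : c + ∫ t in 0..τ, ψ t = -c) :
    Antiperiodic (fun s => c + ∫ t in 0..s, ψ t) τ := by
  intro s
  have hshift : ∫ t in τ..(s + τ), ψ t = -∫ t in 0..s, ψ t := by
    have hcomp := integral_comp_add_right ψ τ (a := 0) (b := s)
    rw [zero_add] at hcomp
    rw [← hcomp, ← intervalIntegral.integral_neg]
    exact integral_congr fun t _ => hψ t
  have hsplit := integral_add_adjacent_intervals (hint 0 τ) (hint τ (s + τ))
  simp only
  linarith

lemma antiperiodic_primitive {f f' ψ : ℝ → ℝ} (hτ : 0 ≤ τ) (hf : ContinuousOn f (Icc 0 τ))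
    (hf' : ∀ s ∈ Ioo 0 τ, HasDerivAt f (f' s) s) (hfτ : f τ = -f 0) (hψ : Antiperiodic ψ τ)
    (hint : ∀ a b, IntervalIntegrable ψ volume a b) (heq : EqOn ψ f' (Ioo 0 τ)) :
    Antiperiodic (fun s => f 0 + ∫ t in 0..s, ψ t) τ ∧
      EqOn (fun s => f 0 + ∫ t in 0..s, ψ t) f (Icc 0 τ) := by
  have hprim : EqOn (fun s => f 0 + ∫ t in 0..s, ψ t) f (Icc 0 τ) := by
    intro s hs
    have hderiv : ∀ x ∈ Ioo 0 s, HasDerivAt f (ψ x) x := fun x hx => by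
      have hx' := Ioo_subset_Ioo_right hs.2 hx
      exact heq hx' ▸ hf' x hx'
    have hftc := integral_eq_sub_of_hasDerivAt_of_le hs.1 (hf.mono (Icc_subset_Icc_right hs.2))
      hderiv (hint 0 s)
    simp only [hftc, add_sub_cancel]
  exact ⟨antiperiodic_const_add_integral hψ hint
    ((hprim (right_mem_Icc.2 hτ)).trans hfτ), hprim⟩

lemma hasDerivAt_const_add_integral {ψ : ℝ → ℝ} (hψ : Continuous ψ) (c s : ℝ) :
    HasDerivAt (fun s => c + ∫ t in 0..s, ψ t) (ψ s) s :=
  (hψ.integral_hasStrictDerivAt 0 s).hasDerivAt.const_add c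

lemma integral_deriv_const_add_integral {ψ : ℝ → ℝ}
    (hint : ∀ a b, IntervalIntegrable ψ volume a b) (c a b : ℝ) :
    ∫ s in a..b, deriv (fun s => c + ∫ t in 0..s, ψ t) s =
      (c + ∫ t in 0..b, ψ t) - (c + ∫ t in 0..a, ψ t) := by
  have hloc : LocallyIntegrable ψ volume := fun x =>
    ⟨Ioo (x - 1) (x + 1), Ioo_mem_nhds (by linarith) (by linarith),
      (hint (x - 1) (x + 1)).1.mono_set Ioo_subset_Ioc_self⟩
  have hae : deriv (fun s => c + ∫ t in 0..s, ψ t) =ᵐ[volume] ψ := by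
    filter_upwards [LocallyIntegrable.ae_hasDerivAt_integral hloc] with x hx
    exact ((hx 0).const_add c).deriv
  rw [integral_congr_ae (hae.mono fun x hx _ => hx), add_sub_add_left_eq_sub,
    integral_interval_sub_left (hint 0 b) (hint 0 a)]

/-- `f₀` is twice continuously differentiable on `[a, b]` with derivatives `f₁`, `f₂`, and `f₃` is
the third derivative on `(a, b)`, which may be singular but integrable at the end points. -/
structure HasThreeDerivs (a b : ℝ) (f₀ f₁ f₂ f₃ : ℝ → ℝ) : Prop where
  continuousOn₀ : ContinuousOn f₀ (Icc a b)
  continuousOn₁ : ContinuousOn f₁ (Icc a b)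
  continuousOn₂ : ContinuousOn f₂ (Icc a b)
  hasDerivAt₀ : ∀ s ∈ Ioo a b, HasDerivAt f₀ (f₁ s) s
  hasDerivAt₁ : ∀ s ∈ Ioo a b, HasDerivAt f₁ (f₂ s) s
  hasDerivAt₂ : ∀ s ∈ Ioo a b, HasDerivAt f₂ (f₃ s) s
  intervalIntegrable₃ : IntervalIntegrable f₃ volume a b

variable {f₀ f₁ f₂ f₃ : ℝ → ℝ}

lemma HasThreeDerivs.exists_antiperiodic (h : HasThreeDerivs 0 τ f₀ f₁ f₂ f₃) (hτ : 0 < τ)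
    (h₀ : f₀ τ = -f₀ 0) (h₁ : f₁ τ = -f₁ 0) (h₂ : f₂ τ = -f₂ 0) :
    ∃ φ : ℝ → ℝ, Antiperiodic φ τ ∧ ContDiff ℝ 2 φ ∧
      (∀ a b, deriv (deriv φ) b - deriv (deriv φ) a = ∫ s in a..b, deriv (deriv (deriv φ)) s) ∧
      EqOn φ f₀ (Icc 0 τ) := by
  have hint := intervalIntegrable_antiperiodicExtension hτ h.intervalIntegrable₃
  obtain ⟨hanti₂, heq₂⟩ := antiperiodic_primitive hτ.le h.continuousOn₂ h.hasDerivAt₂ h₂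
    (antiperiodic_antiperiodicExtension hτ.ne' f₃) hint
    ((antiperiodicExtension_eqOn f₃).mono Ioo_subset_Ico_self)
  set φ₂ : ℝ → ℝ := fun s => f₂ 0 + ∫ t in 0..s, antiperiodicExtension τ f₃ t
  have hcont₂ : Continuous φ₂ := continuous_const.add (continuous_primitive hint 0)
  obtain ⟨hanti₁, heq₁⟩ := antiperiodic_primitive hτ.le h.continuousOn₁ h.hasDerivAt₁ h₁ hanti₂
    hcont₂.intervalIntegrable (heq₂.mono Ioo_subset_Icc_self)
  set φ₁ : ℝ → ℝ := fun s => f₁ 0 + ∫ t in 0..s, φ₂ t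
  have hderiv₁ : ∀ s, HasDerivAt φ₁ (φ₂ s) s := hasDerivAt_const_add_integral hcont₂ _
  have hcont₁ : Continuous φ₁ := continuous_iff_continuousAt.2 fun s => (hderiv₁ s).continuousAt
  obtain ⟨hanti₀, heq₀⟩ := antiperiodic_primitive hτ.le h.continuousOn₀ h.hasDerivAt₀ h₀ hanti₁
    hcont₁.intervalIntegrable (heq₁.mono Ioo_subset_Icc_self)
  set φ₀ : ℝ → ℝ := fun s => f₀ 0 + ∫ t in 0..s, φ₁ t
  have hderiv₀ : ∀ s, HasDerivAt φ₀ (φ₁ s) s := hasDerivAt_const_add_integral hcont₁ _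
  have hφ₀ : deriv φ₀ = φ₁ := funext fun s => (hderiv₀ s).deriv
  have hφ₁ : deriv φ₁ = φ₂ := funext fun s => (hderiv₁ s).deriv
  refine ⟨φ₀, hanti₀, ?_, fun a b => ?_, heq₀⟩
  · have hsmooth₁ : ContDiff ℝ 1 φ₁ :=
      contDiff_one_iff_deriv.2 ⟨fun s => (hderiv₁ s).differentiableAt, hφ₁ ▸ hcont₂⟩
    rw [show (2 : WithTop ℕ∞) = 1 + 1 by norm_num, contDiff_succ_iff_deriv, hφ₀]
    exact ⟨fun s => (hderiv₀ s).differentiableAt, by simp, hsmooth₁⟩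
  · rw [hφ₀, hφ₁, integral_deriv_const_add_integral hint]

/-- The left-hand side of the oscillatory-component equation. -/
noncomputable def oscResidual (n : ℝ) (φ : ℝ → ℝ) (s : ℝ) : ℝ :=
  deriv (deriv (deriv φ)) s + 3 * (3 / n - 1) * deriv (deriv φ) s
    + (3 * (3 / n) ^ 2 - 6 * (3 / n) + 2) * deriv φ s
    + (3 / n) * (3 / n - 1) * (3 / n - 2) * φ s + |φ s| ^ (-n) * φ s

lemma antiperiodic_oscResidual (n : ℝ) {φ : ℝ → ℝ} (hφ : Antiperiodic φ τ) :
    Antiperiodic (oscResidual n φ) τ := by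
  intro s
  have hφ₁ := antiperiodic_deriv hφ
  have hφ₂ := antiperiodic_deriv hφ₁
  simp only [oscResidual, hφ s, hφ₁ s, hφ₂ s, antiperiodic_deriv hφ₂ s, abs_neg]
  ring

lemma HasThreeDerivs.exists_isOscSol {n : ℝ} (h : HasThreeDerivs 0 τ f₀ f₁ f₂ f₃) (hτ : 0 < τ)
    (h₀ : f₀ 0 = 0) (h₀' : f₀ τ = 0) (h₁ : f₁ τ = -f₁ 0) (h₂ : f₂ τ = -f₂ 0)
    (hpos : ∀ s ∈ Ioo 0 τ, 0 < f₀ s)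
    (hode : ∀ s ∈ Ioo 0 τ, f₃ s + 3 * (3 / n - 1) * f₂ s
      + (3 * (3 / n) ^ 2 - 6 * (3 / n) + 2) * f₁ s
      + (3 / n) * (3 / n - 1) * (3 / n - 2) * f₀ s + |f₀ s| ^ (-n) * f₀ s = 0) :
    ∃ (φ : ℝ → ℝ) (T : ℝ), 0 < T ∧ IsOscSol n φ ∧ Periodic φ T ∧
      (∃ s, 0 < φ s) ∧ ∃ s, φ s < 0 := by
  obtain ⟨φ, hanti, hsmooth, hftc, heq⟩ := h.exists_antiperiodic hτ (by simp [h₀, h₀']) h₁ h₂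
  have hderiv₀ : EqOn (deriv φ) f₁ (Ioo 0 τ) := fun s hs =>
    ((heq.mono Ioo_subset_Icc_self).deriv isOpen_Ioo hs).trans (h.hasDerivAt₀ s hs).deriv
  have hderiv₁ : EqOn (deriv (deriv φ)) f₂ (Ioo 0 τ) := fun s hs =>
    (hderiv₀.deriv isOpen_Ioo hs).trans (h.hasDerivAt₁ s hs).deriv
  have hderiv₂ : EqOn (deriv (deriv (deriv φ))) f₃ (Ioo 0 τ) := fun s hs =>
    (hderiv₁.deriv isOpen_Ioo hs).trans (h.hasDerivAt₂ s hs).deriv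
  have hperiodic : Periodic (fun s => φ s ≠ 0 → oscResidual n φ s = 0) τ := fun s => by
    simp only [hanti s, antiperiodic_oscResidual n hanti s, ne_eq, neg_eq_zero]
  have hresidual (s : ℝ) : φ s ≠ 0 → oscResidual n φ s = 0 := by
    obtain ⟨y, hy, hsy⟩ := hperiodic.exists_mem_Ico₀ hτ s
    rw [hsy]
    intro hne
    have hy0 : y ≠ 0 := by rintro rfl; exact hne ((heq ⟨le_rfl, hτ.le⟩).trans h₀)
    have hy' : y ∈ Ioo 0 τ := ⟨hy.1.lt_of_ne' hy0, hy.2⟩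
    simpa only [oscResidual, heq (Ioo_subset_Icc_self hy'), hderiv₀ hy', hderiv₁ hy', hderiv₂ hy']
      using hode y hy'
  have hhalf : τ / 2 ∈ Ioo 0 τ := ⟨half_pos hτ, half_lt_self hτ⟩
  have hφ : 0 < φ (τ / 2) := (hpos _ hhalf).trans_eq (heq (Ioo_subset_Icc_self hhalf)).symm
  exact ⟨φ, 2 * τ, by positivity, ⟨hsmooth, hftc, hresidual⟩, hanti.periodic_two_mul,
    ⟨τ / 2, hφ⟩, τ / 2 + τ, by rw [hanti]; linarith⟩

end Antiperiodic

section ChangeOfVariables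

variable {σ τ q s : ℝ} {f₀ f₁ f₂ f₃ : ℝ → ℝ}

/-- The logarithmic change of variables `s ↦ e^{s+σ} - e^σ`, normalised to vanish at `0`. -/
noncomputable def expShift (σ s : ℝ) : ℝ := Real.exp (s + σ) - Real.exp σ

@[simp]
lemma expShift_zero (σ : ℝ) : expShift σ 0 = 0 := by simp [expShift]

lemma strictMono_expShift (σ : ℝ) : StrictMono (expShift σ) := fun _ _ hab =>
  sub_lt_sub_right (Real.exp_lt_exp.2 (add_lt_add_left hab σ)) _

lemma hasDerivAt_expShift (σ s : ℝ) : HasDerivAt (expShift σ) (Real.exp (s + σ)) s :=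
  (((hasDerivAt_id s).add_const σ).exp.sub_const (Real.exp σ)).congr_deriv (mul_one _)

lemma continuous_expShift (σ : ℝ) : Continuous (expShift σ) := by unfold expShift; fun_prop

lemma exists_expShift_eq_one (hτ : 0 < τ) : ∃ σ, expShift σ τ = 1 := by
  have hpos : 0 < Real.exp τ - 1 := sub_pos.2 (Real.one_lt_exp_iff.2 hτ)
  refine ⟨-Real.log (Real.exp τ - 1), ?_⟩
  rw [expShift, Real.exp_add, ← sub_one_mul, Real.exp_neg, Real.exp_log hpos,
    mul_inv_cancel₀ hpos.ne']

lemma mapsTo_expShift_Icc (hσ : expShift σ τ = 1) :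
    MapsTo (expShift σ) (Icc 0 τ) (Icc 0 1) := by
  simpa [hσ] using (strictMono_expShift σ).monotone.mapsTo_Icc (a := 0) (b := τ)

lemma mapsTo_expShift_Ioo (hσ : expShift σ τ = 1) :
    MapsTo (expShift σ) (Ioo 0 τ) (Ioo 0 1) := by
  simpa [hσ] using (strictMono_expShift σ).mapsTo_Ioo (a := 0) (b := τ)

/-- The self-similar rescaling `s ↦ e^{-q(s+σ)} f(e^{s+σ} - e^σ)`. Applying `D + q` to it gives the
rescaling of `f'` with exponent `q - 1`. -/
noncomputable def expScale (σ q : ℝ) (f : ℝ → ℝ) (s : ℝ) : ℝ :=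
  Real.exp (-q * (s + σ)) * f (expShift σ s)

lemma exp_mul_expScale (σ q : ℝ) (f : ℝ → ℝ) (s : ℝ) :
    Real.exp (s + σ) * expScale σ q f s = expScale σ (q - 1) f s := by
  rw [expScale, expScale, ← mul_assoc, ← Real.exp_add]
  ring_nf

lemma hasDerivAt_expScale {f f' : ℝ → ℝ} (hf : HasDerivAt f (f' (expShift σ s)) (expShift σ s)) :
    HasDerivAt (expScale σ q f) (expScale σ (q - 1) f' s - q * expScale σ q f s) s := by
  have hexp := (((hasDerivAt_id s).add_const σ).const_mul (-q)).exp
  refine (hexp.mul (hf.comp s (hasDerivAt_expShift σ s))).congr_deriv ?_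
  rw [← exp_mul_expScale]
  simp only [expScale, id, Function.comp]
  ring

lemma continuousOn_expScale {f : ℝ → ℝ} (hσ : expShift σ τ = 1) (hf : ContinuousOn f (Icc 0 1)) :
    ContinuousOn (expScale σ q f) (Icc 0 τ) :=
  ContinuousOn.mul (by fun_prop)
    (hf.comp (continuous_expShift σ).continuousOn (mapsTo_expShift_Icc hσ))

lemma intervalIntegrable_expScale {f : ℝ → ℝ} (hτ : 0 ≤ τ) (hσ : expShift σ τ = 1)
    (hf : IntervalIntegrable f volume 0 1) : IntervalIntegrable (expScale σ q f) volume 0 τ := by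
  have hmono := strictMono_expShift σ
  have himage : expShift σ '' Ioc 0 τ ⊆ Ioc 0 1 := by
    simpa [hσ] using hmono.image_Ioc_subset (a := 0) (b := τ)
  have hsmul : IntegrableOn (fun s => Real.exp (s + σ) • f (expShift σ s)) (Ioc 0 τ) volume :=
    (integrableOn_image_iff_integrableOn_deriv_smul_of_monotoneOn measurableSet_Ioc
      (fun s _ => (hasDerivAt_expShift σ s).hasDerivWithinAt) (hmono.monotone.monotoneOn _) f).1
      (hf.1.mono_set himage)
  have hint := (intervalIntegrable_iff_integrableOn_Ioc_of_le hτ).2 hsmul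
  refine (hint.continuousOn_mul (g := fun s => Real.exp (-(q + 1) * (s + σ)))
    (by fun_prop)).congr_ae (Eventually.of_forall fun s => ?_)
  simp only [expScale, smul_eq_mul, ← mul_assoc, ← Real.exp_add]
  ring_nf

lemma HasThreeDerivs.rescale (h : HasThreeDerivs 0 1 f₀ f₁ f₂ f₃) (q : ℝ) (hτ : 0 ≤ τ)
    (hσ : expShift σ τ = 1) :
    HasThreeDerivs 0 τ (expScale σ q f₀)
      (fun s => expScale σ (q - 1) f₁ s - q * expScale σ q f₀ s)
      (fun s => expScale σ (q - 2) f₂ s - (2 * q - 1) * expScale σ (q - 1) f₁ s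
        + q ^ 2 * expScale σ q f₀ s)
      (fun s => expScale σ (q - 3) f₃ s - 3 * (q - 1) * expScale σ (q - 2) f₂ s
        + (3 * q ^ 2 - 3 * q + 1) * expScale σ (q - 1) f₁ s - q ^ 3 * expScale σ q f₀ s) := by
  have hc₀ := continuousOn_expScale (q := q) hσ h.continuousOn₀
  have hc₁ := continuousOn_expScale (q := q - 1) hσ h.continuousOn₁
  have hc₂ := continuousOn_expScale (q := q - 2) hσ h.continuousOn₂
  have hd₀ (s) (hs : s ∈ Ioo 0 τ) :=
    hasDerivAt_expScale (q := q) (h.hasDerivAt₀ _ (mapsTo_expShift_Ioo hσ hs))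
  have hd₁ (s) (hs : s ∈ Ioo 0 τ) :=
    hasDerivAt_expScale (q := q - 1) (h.hasDerivAt₁ _ (mapsTo_expShift_Ioo hσ hs))
  have hd₂ (s) (hs : s ∈ Ioo 0 τ) :=
    hasDerivAt_expScale (q := q - 2) (h.hasDerivAt₂ _ (mapsTo_expShift_Ioo hσ hs))
  rw [show q - 1 - 1 = q - 2 by ring] at hd₁
  rw [show q - 2 - 1 = q - 3 by ring] at hd₂
  refine ⟨hc₀, by fun_prop, by fun_prop, hd₀, fun s hs => ?_, fun s hs => ?_, ?_⟩
  · exact ((hd₁ s hs).sub ((hd₀ s hs).const_mul q)).congr_deriv (by ring)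
  · exact (((hd₂ s hs).sub ((hd₁ s hs).const_mul (2 * q - 1))).add
      ((hd₀ s hs).const_mul (q ^ 2))).congr_deriv (by ring)
  · rw [← uIcc_of_le hτ] at hc₀ hc₁ hc₂
    exact (((intervalIntegrable_expScale hτ hσ h.intervalIntegrable₃).sub
      (hc₂.intervalIntegrable.const_mul _)).add (hc₁.intervalIntegrable.const_mul _)).sub
      (hc₀.intervalIntegrable.const_mul _)

lemma expScale_eq_neg {f : ℝ → ℝ} (hσ : expShift σ τ = 1) (hf : f 1 = -(Real.exp (q * τ) * f 0)) :
    expScale σ q f τ = -expScale σ q f 0 := by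
  rw [expScale, expScale, hσ, expShift_zero, hf, mul_neg, ← mul_assoc, ← Real.exp_add]
  ring_nf

lemma HasThreeDerivs.exists_isOscSol_of_boundary {n : ℝ} (h : HasThreeDerivs 0 1 f₀ f₁ f₂ f₃)
    (hn : n ≠ 0) (hτ : 0 < τ) (h₀ : f₀ 0 = 0) (h₀' : f₀ 1 = 0)
    (h₁ : f₁ 1 = -(Real.exp ((3 / n - 1) * τ) * f₁ 0))
    (h₂ : f₂ 1 = -(Real.exp ((3 / n - 2) * τ) * f₂ 0)) (hpos : ∀ x ∈ Ioo (0 : ℝ) 1, 0 < f₀ x)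
    (hode : ∀ x ∈ Ioo (0 : ℝ) 1, f₃ x = -f₀ x ^ (1 - n)) :
    ∃ (φ : ℝ → ℝ) (T : ℝ), 0 < T ∧ IsOscSol n φ ∧ Periodic φ T ∧
      (∃ s, 0 < φ s) ∧ ∃ s, φ s < 0 := by
  obtain ⟨σ, hσ⟩ := exists_expShift_eq_one hτ
  have hleft : expScale σ (3 / n) f₀ 0 = 0 := by simp [expScale, h₀]
  have hright : expScale σ (3 / n) f₀ τ = 0 := by simp [expScale, hσ, h₀']
  have hslope := expScale_eq_neg hσ h₁
  have hcurv := expScale_eq_neg hσ h₂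
  have hscale_pos : ∀ s ∈ Ioo 0 τ, 0 < expScale σ (3 / n) f₀ s := fun s hs =>
    mul_pos (Real.exp_pos _) (hpos _ (mapsTo_expShift_Ioo hσ hs))
  refine (h.rescale (3 / n) hτ.le hσ).exists_isOscSol (n := n) hτ hleft hright ?_ ?_
    hscale_pos fun s hs => ?_
  · simp only [hleft, hright, hslope]; ring
  · simp only [hleft, hright, hslope, hcurv]; ring
  · have hx := mapsTo_expShift_Ioo hσ hs
    have hnonlin : |expScale σ (3 / n) f₀ s| ^ (-n) * expScale σ (3 / n) f₀ s =
        -expScale σ (3 / n - 3) f₃ s := by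
      rw [abs_of_pos (hscale_pos s hs), ← Real.rpow_add_one (hscale_pos s hs).ne',
        neg_add_eq_sub, expScale, expScale,
        Real.mul_rpow (Real.exp_pos _).le (hpos _ hx).le, hode _ hx, ← Real.exp_mul]
      rw [show -(3 / n) * (s + σ) * (1 - n) = -(3 / n - 3) * (s + σ) by field_simp]
      ring
    rw [hnonlin]
    ring

end ChangeOfVariables

section Moment

variable {u v g : ℝ → ℝ}

/-- The integral of `g` over `[0, 1]` against the weight `u`. -/
noncomputable def moment (u g : ℝ → ℝ) : ℝ := ∫ t in 0..1, u t * g t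

lemma moment_one (g : ℝ → ℝ) : moment 1 g = ∫ t in 0..1, g t := by simp [moment]

lemma moment_const_mul (c : ℝ) (u g : ℝ → ℝ) :
    moment (fun t => c * u t) g = c * moment u g := by
  simp only [moment, mul_assoc, intervalIntegral.integral_const_mul]

lemma moment_add (hg : IntervalIntegrable g volume 0 1) (hu : Continuous u) (hv : Continuous v) :
    moment (fun t => u t + v t) g = moment u g + moment v g := by
  simp only [moment, add_mul]
  exact intervalIntegral.integral_add (hg.continuousOn_mul hu.continuousOn)
    (hg.continuousOn_mul hv.continuousOn)

lemma moment_sub (hg : IntervalIntegrable g volume 0 1) (hu : Continuous u) (hv : Continuous v) :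
    moment (fun t => u t - v t) g = moment u g - moment v g := by
  simp only [moment, sub_mul]
  exact intervalIntegral.integral_sub (hg.continuousOn_mul hu.continuousOn)
    (hg.continuousOn_mul hv.continuousOn)

/-- A positive integrable function on `(0, 1)`, possibly unbounded at the end points. -/
structure IsDensity (g : ℝ → ℝ) : Prop where
  intervalIntegrable : IntervalIntegrable g volume 0 1
  pos : ∀ t ∈ Ioo (0 : ℝ) 1, 0 < g t

namespace IsDensity

variable {h : ℝ → ℝ}

lemma moment_le_moment (hg : IsDensity g) (hh : IsDensity h) (hu : Continuous u)
    (hv : Continuous v) (hle : ∀ t ∈ Ioo (0 : ℝ) 1, u t * g t ≤ v t * h t) :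
    moment u g ≤ moment v h :=
  integral_mono_on_of_le_Ioo zero_le_one (hg.intervalIntegrable.continuousOn_mul hu.continuousOn)
    (hh.intervalIntegrable.continuousOn_mul hv.continuousOn) hle

lemma moment_mono (hg : IsDensity g) (hu : Continuous u) (hv : Continuous v)
    (huv : ∀ t ∈ Ioo (0 : ℝ) 1, u t ≤ v t) : moment u g ≤ moment v g :=
  hg.moment_le_moment hg hu hv fun t ht => mul_le_mul_of_nonneg_right (huv t ht) (hg.pos t ht).le

lemma moment_le_const_mul (hg : IsDensity g) (hh : IsDensity h) (hu : Continuous u)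
    (hu₀ : ∀ t ∈ Ioo (0 : ℝ) 1, 0 ≤ u t) {c : ℝ} (hle : ∀ t ∈ Ioo (0 : ℝ) 1, g t ≤ c * h t) :
    moment u g ≤ c * moment u h := by
  rw [← moment_const_mul]
  refine hg.moment_le_moment hh hu (by fun_prop) fun t ht => ?_
  rw [mul_comm c, mul_assoc]
  exact mul_le_mul_of_nonneg_left (hle t ht) (hu₀ t ht)

lemma moment_pos (hg : IsDensity g) (hu : Continuous u) (hu₀ : ∀ t ∈ Ioo (0 : ℝ) 1, 0 < u t) :
    0 < moment u g :=
  intervalIntegral_pos_of_pos_on (hg.intervalIntegrable.continuousOn_mul hu.continuousOn)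
    (fun t ht => mul_pos (hu₀ t ht) (hg.pos t ht)) one_pos

end IsDensity

end Moment

section Primitive

variable {g : ℝ → ℝ} {b : ℝ}

lemma continuousOn_integral_mul {u : ℝ → ℝ} (hu : Continuous u)
    (hg : IntervalIntegrable g volume 0 b) :
    ContinuousOn (fun x => ∫ t in 0..x, u t * g t) (uIcc 0 b) :=
  continuousOn_primitive_interval'
    (hg.continuousOn_mul hu.continuousOn) left_mem_uIcc

lemma hasDerivAt_integral_mul {u : ℝ → ℝ} (hu : Continuous u)
    (hg : IntervalIntegrable g volume 0 b) (hgc : ContinuousOn g (Ioo 0 b)) {x : ℝ}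
    (hx : x ∈ Ioo 0 b) : HasDerivAt (fun x => ∫ t in 0..x, u t * g t) (u x * g x) x := by
  have hc : ContinuousOn (fun t => u t * g t) (Ioo 0 b) := hu.continuousOn.mul hgc
  have hsub : uIcc 0 x ⊆ uIcc 0 b := by
    rw [uIcc_of_le hx.1.le, uIcc_of_le (hx.1.trans hx.2).le]
    exact Icc_subset_Icc_right hx.2.le
  exact integral_hasDerivAt_right ((hg.continuousOn_mul hu.continuousOn).mono_set hsub)
    (hc.stronglyMeasurableAtFilter isOpen_Ioo x hx) (hc.continuousAt (Ioo_mem_nhds hx.1 hx.2))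

lemma integral_sub_mul {x : ℝ} (hg : IntervalIntegrable g volume 0 x) :
    ∫ t in 0..x, (x - t) * g t = x * (∫ t in 0..x, g t) - ∫ t in 0..x, t * g t := by
  have h₁ : IntervalIntegrable (fun t => t * g t) volume 0 x := hg.continuousOn_mul continuousOn_id
  simp only [sub_mul]
  rw [intervalIntegral.integral_sub (hg.const_mul x) h₁, intervalIntegral.integral_const_mul]

lemma integral_sub_sq_mul {x : ℝ} (hg : IntervalIntegrable g volume 0 x) :
    ∫ t in 0..x, (x - t) ^ 2 * g t =
      x ^ 2 * (∫ t in 0..x, g t) - 2 * x * (∫ t in 0..x, t * g t)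
        + ∫ t in 0..x, t ^ 2 * g t := by
  have hexpand (t : ℝ) : (x - t) ^ 2 * g t = x ^ 2 * (g t) - 2 * x * (t * g t) + t ^ 2 * g t := by
    ring
  have h₁ : IntervalIntegrable (fun t => t * g t) volume 0 x := hg.continuousOn_mul continuousOn_id
  have h₂ : IntervalIntegrable (fun t => t ^ 2 * g t) volume 0 x :=
    hg.continuousOn_mul (by fun_prop)
  simp only [hexpand]
  rw [intervalIntegral.integral_add ((hg.const_mul _).sub (h₁.const_mul _)) h₂,
    intervalIntegral.integral_sub (hg.const_mul _) (h₁.const_mul _),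
    intervalIntegral.integral_const_mul, intervalIntegral.integral_const_mul]

lemma continuousOn_integral_sub_sq_mul (hb : 0 ≤ b) (hg : IntervalIntegrable g volume 0 b) :
    ContinuousOn (fun x => ∫ t in 0..x, (x - t) ^ 2 * g t) (Icc 0 b) := by
  have hc₀ := continuousOn_integral_mul continuous_one hg
  have hc₁ := continuousOn_integral_mul continuous_id hg
  have hc₂ := continuousOn_integral_mul (continuous_pow 2) hg
  rw [uIcc_of_le hb] at hc₀ hc₁ hc₂
  simp only [id, Pi.one_apply, one_mul] at hc₀ hc₁
  exact ContinuousOn.congr (by fun_prop) fun x hx =>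
    integral_sub_sq_mul (hg.mono_set (uIcc_subset_uIcc_left (uIcc_of_le hb ▸ hx)))

lemma hasThreeDerivs_iteratedPrimitive (hb : 0 ≤ b) (hg : IntervalIntegrable g volume 0 b)
    (hgc : ContinuousOn g (Ioo 0 b)) :
    HasThreeDerivs 0 b (fun x => (∫ t in 0..x, (x - t) ^ 2 * g t) / 2)
      (fun x => ∫ t in 0..x, (x - t) * g t) (fun x => ∫ t in 0..x, g t) g := by
  have hgx {x : ℝ} (hx : x ∈ Icc 0 b) : IntervalIntegrable g volume 0 x :=
    hg.mono_set (uIcc_subset_uIcc_left (uIcc_of_le hb ▸ hx))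
  have hc₀ := continuousOn_integral_mul continuous_one hg
  have hc₁ := continuousOn_integral_mul continuous_id hg
  rw [uIcc_of_le hb] at hc₀ hc₁
  have hd₀ {x : ℝ} (hx : x ∈ Ioo 0 b) :=
    hasDerivAt_integral_mul continuous_one hg hgc hx
  have hd₁ {x : ℝ} (hx : x ∈ Ioo 0 b) := hasDerivAt_integral_mul continuous_id hg hgc hx
  have hd₂ {x : ℝ} (hx : x ∈ Ioo 0 b) := hasDerivAt_integral_mul (continuous_pow 2) hg hgc hx
  have heq₁ {x : ℝ} (hx : x ∈ Icc 0 b) := integral_sub_mul (hgx hx)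
  have heq₂ {x : ℝ} (hx : x ∈ Icc 0 b) := congrArg (· / 2) (integral_sub_sq_mul (hgx hx))
  have hnhds {x : ℝ} (hx : x ∈ Ioo 0 b) : Icc 0 b ∈ 𝓝 x := Icc_mem_nhds hx.1 hx.2
  simp only [id, Pi.one_apply, one_mul] at hc₀ hd₀ hc₁ hd₁
  refine ⟨(continuousOn_integral_sub_sq_mul hb hg).div_const 2,
    ContinuousOn.congr (by fun_prop) fun x hx => heq₁ hx, hc₀, fun x hx => ?_, fun x hx => ?_,
    fun x hx => hd₀ hx, hg⟩
  · have hid := hasDerivAt_id x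
    refine HasDerivAt.congr_of_eventuallyEq (HasDerivAt.congr_deriv
      (((((hid.pow 2).mul (hd₀ hx)).sub ((hid.const_mul 2).mul (hd₁ hx))).add
        (hd₂ hx)).div_const 2) ?_) (mem_of_superset (hnhds hx) fun y hy => heq₂ hy)
    simp only [heq₁ (Ioo_subset_Icc_self hx), id, Pi.pow_apply]
    ring
  · refine HasDerivAt.congr_of_eventuallyEq (HasDerivAt.congr_deriv
      (((hasDerivAt_id x).mul (hd₀ hx)).sub (hd₁ hx)) ?_)
      (mem_of_superset (hnhds hx) fun y hy => heq₁ hy)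
    simp only [id]
    ring

end Primitive

section GreenKernel

variable {θ x t : ℝ} {g : ℝ → ℝ}

/-- The weight `t (1 - t)`. -/
noncomputable def parabola (t : ℝ) : ℝ := t * (1 - t)

/-- The Green's function of `-F''' = g` on `[0, 1]` with `F 0 = F 1 = 0` and
`θ F' 1 = -(θ + 1) F' 0`. -/
noncomputable def greenKernel (θ x t : ℝ) : ℝ :=
  θ * (parabola x * parabola t) + (x ^ 2 * (1 - t) ^ 2 - max (x - t) 0 ^ 2) / 2

/-- The solution `F` of `-F''' = g` with the boundary conditions of `greenKernel`. -/
noncomputable def greenOp (θ : ℝ) (g : ℝ → ℝ) (x : ℝ) : ℝ := moment (greenKernel θ x) g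

/-- The second derivative of `greenOp θ g` at `0`. -/
noncomputable def initialCurvature (θ : ℝ) (g : ℝ → ℝ) : ℝ :=
  moment (fun t => (1 - t) ^ 2) g - 2 * θ * moment parabola g

@[fun_prop]
lemma continuous_parabola : Continuous parabola := by unfold parabola; fun_prop

@[fun_prop]
lemma continuous_greenKernel (θ x : ℝ) : Continuous (greenKernel θ x) := by
  unfold greenKernel; fun_prop

lemma parabola_pos (ht : t ∈ Ioo (0 : ℝ) 1) : 0 < parabola t := mul_pos ht.1 (sub_pos.2 ht.2)

lemma parabola_nonneg (ht : t ∈ Icc (0 : ℝ) 1) : 0 ≤ parabola t :=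
  mul_nonneg ht.1 (sub_nonneg.2 ht.2)

lemma parabola_le_left (ht : 0 ≤ t) : parabola t ≤ t :=
  mul_le_of_le_one_right ht (sub_le_self 1 ht)

lemma parabola_le_one_sub (ht : t ≤ 1) : parabola t ≤ 1 - t :=
  mul_le_of_le_one_left (sub_nonneg.2 ht) ht

lemma parabola_le_one (ht : t ∈ Icc (0 : ℝ) 1) : parabola t ≤ 1 :=
  (parabola_le_left ht.1).trans ht.2

lemma sq_mul_sq_sub_max_sq_of_le (h : t ≤ x) :
    x ^ 2 * (1 - t) ^ 2 - max (x - t) 0 ^ 2 = t * (1 - x) * (x * (1 - t) + (x - t)) := by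
  rw [max_eq_left (sub_nonneg.2 h)]
  ring

lemma sq_mul_sq_sub_max_sq_of_ge (h : x ≤ t) :
    x ^ 2 * (1 - t) ^ 2 - max (x - t) 0 ^ 2 = (x * (1 - t)) ^ 2 := by
  rw [max_eq_right (sub_nonpos.2 h)]
  ring

lemma le_greenKernel (hx : x ∈ Icc (0 : ℝ) 1) (ht : t ∈ Icc (0 : ℝ) 1) :
    θ * (parabola x * parabola t) + x * parabola x * parabola t ^ 2 / 2 ≤ greenKernel θ x t := by
  suffices x * parabola x * parabola t ^ 2 ≤ x ^ 2 * (1 - t) ^ 2 - max (x - t) 0 ^ 2 by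
    rw [greenKernel]; linarith
  have hx' : 0 ≤ 1 - x := sub_nonneg.2 hx.2
  have ht' : 0 ≤ 1 - t := sub_nonneg.2 ht.2
  have hx₀ := hx.1
  have ht₀ := ht.1
  rcases le_total t x with h | h
  · have hsmall : x * parabola t ≤ 1 :=
      mul_le_one₀ hx.2 (parabola_nonneg ht) (parabola_le_one ht)
    rw [sq_mul_sq_sub_max_sq_of_le h]
    calc x * parabola x * parabola t ^ 2
        = t * (1 - x) * (x * (1 - t) * (x * parabola t)) := by unfold parabola; ring
      _ ≤ t * (1 - x) * (x * (1 - t) + (x - t)) := by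
        refine mul_le_mul_of_nonneg_left ?_ (by positivity)
        linarith [mul_le_of_le_one_right (mul_nonneg hx₀ ht') hsmall]
  · have hsmall : (1 - x) * t ^ 2 ≤ 1 :=
      mul_le_one₀ (sub_le_self 1 hx₀) (sq_nonneg t) (pow_le_one₀ ht₀ ht.2)
    rw [sq_mul_sq_sub_max_sq_of_ge h]
    calc x * parabola x * parabola t ^ 2
        = (x * (1 - t)) ^ 2 * ((1 - x) * t ^ 2) := by unfold parabola; ring
      _ ≤ (x * (1 - t)) ^ 2 := mul_le_of_le_one_right (sq_nonneg _) hsmall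

lemma mul_parabola_le_greenKernel (hx : x ∈ Icc (0 : ℝ) 1) (ht : t ∈ Icc (0 : ℝ) 1) :
    θ * (parabola x * parabola t) ≤ greenKernel θ x t := by
  have hnonneg : 0 ≤ x * parabola x * parabola t ^ 2 :=
    mul_nonneg (mul_nonneg hx.1 (parabola_nonneg hx)) (sq_nonneg _)
  linarith [le_greenKernel (θ := θ) hx ht]

lemma greenKernel_le (hx : x ∈ Icc (0 : ℝ) 1) (ht : t ∈ Icc (0 : ℝ) 1) :
    greenKernel θ x t ≤ (θ + 1) * (parabola x * parabola t) := by
  suffices x ^ 2 * (1 - t) ^ 2 - max (x - t) 0 ^ 2 ≤ 2 * (parabola x * parabola t) by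
    rw [greenKernel]; linarith
  have hleft : 0 ≤ t * (1 - x) := mul_nonneg ht.1 (sub_nonneg.2 hx.2)
  have hright : 0 ≤ x * (1 - t) := mul_nonneg hx.1 (sub_nonneg.2 ht.2)
  have hprod : 2 * (parabola x * parabola t) = 2 * (t * (1 - x)) * (x * (1 - t)) := by
    unfold parabola; ring
  rw [hprod]
  rcases le_total t x with h | h
  · rw [sq_mul_sq_sub_max_sq_of_le h]
    nlinarith
  · rw [sq_mul_sq_sub_max_sq_of_ge h, sq]
    exact mul_le_mul_of_nonneg_right (by linarith) hright

lemma greenKernel_le_add (θ x : ℝ) (ht : t ∈ Icc (0 : ℝ) 1) :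
    greenKernel θ x t ≤ θ * parabola x * parabola t + x ^ 2 / 2 := by
  have hsq : (1 - t) ^ 2 ≤ 1 := pow_le_one₀ (sub_nonneg.2 ht.2) (sub_le_self 1 ht.1)
  have hx := mul_le_of_le_one_right (sq_nonneg x) hsq
  rw [greenKernel]
  linarith [sq_nonneg (max (x - t) 0)]

lemma greenKernel_nonneg (hθ : 0 ≤ θ) (hx : x ∈ Icc (0 : ℝ) 1) (ht : t ∈ Icc (0 : ℝ) 1) :
    0 ≤ greenKernel θ x t :=
  (mul_nonneg hθ (mul_nonneg (parabola_nonneg hx) (parabola_nonneg ht))).trans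
    (mul_parabola_le_greenKernel hx ht)

namespace IsDensity

lemma mul_moment_mul_le_greenOp (hg : IsDensity g) (hx : x ∈ Icc (0 : ℝ) 1) :
    θ * moment parabola g * parabola x ≤ greenOp θ g x := by
  calc θ * moment parabola g * parabola x
      = moment (fun t => θ * parabola x * parabola t) g := by rw [moment_const_mul]; ring
    _ ≤ greenOp θ g x := hg.moment_mono (by fun_prop) (by fun_prop) fun t ht => by
      simpa only [mul_assoc] using mul_parabola_le_greenKernel hx (Ioo_subset_Icc_self ht)

lemma moment_sq_mul_le_greenOp (hg : IsDensity g) (hθ : 0 ≤ θ) (hx : x ∈ Icc (0 : ℝ) 1) :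
    moment (fun t => parabola t ^ 2) g / 2 * (x * parabola x) ≤ greenOp θ g x := by
  calc moment (fun t => parabola t ^ 2) g / 2 * (x * parabola x)
      = moment (fun t => x * parabola x / 2 * parabola t ^ 2) g := by
        rw [moment_const_mul]; ring
    _ ≤ greenOp θ g x := hg.moment_mono (by fun_prop) (by fun_prop) fun t ht => by
      have ht' := Ioo_subset_Icc_self ht
      have hnonneg := mul_nonneg hθ (mul_nonneg (parabola_nonneg hx) (parabola_nonneg ht'))
      linarith [le_greenKernel (θ := θ) hx ht']

lemma greenOp_le (hg : IsDensity g) (hx : x ∈ Icc (0 : ℝ) 1) :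
    greenOp θ g x ≤ (θ + 1) * moment parabola g * parabola x := by
  calc greenOp θ g x
      ≤ moment (fun t => (θ + 1) * parabola x * parabola t) g :=
        hg.moment_mono (by fun_prop) (by fun_prop) fun t ht => by
          simpa only [mul_assoc] using greenKernel_le hx (Ioo_subset_Icc_self ht)
    _ = (θ + 1) * moment parabola g * parabola x := by rw [moment_const_mul]; ring

lemma greenOp_le_add (hg : IsDensity g) (θ x : ℝ) :
    greenOp θ g x ≤ θ * moment parabola g * parabola x + x ^ 2 / 2 * moment 1 g := by
  calc greenOp θ g x
      ≤ moment (fun t => θ * parabola x * parabola t + x ^ 2 / 2 * (1 : ℝ → ℝ) t) g :=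
        hg.moment_mono (by fun_prop) (by fun_prop) fun t ht => by
          simpa using greenKernel_le_add θ x (Ioo_subset_Icc_self ht)
    _ = θ * moment parabola g * parabola x + x ^ 2 / 2 * moment 1 g := by
      rw [moment_add hg.intervalIntegrable (by fun_prop) (by fun_prop), moment_const_mul,
        moment_const_mul]
      ring

lemma greenOp_pos (hg : IsDensity g) (hθ : 0 < θ) (hx : x ∈ Ioo (0 : ℝ) 1) :
    0 < greenOp θ g x :=
  (mul_pos (mul_pos hθ (hg.moment_pos continuous_parabola fun _ => parabola_pos))
    (parabola_pos hx)).trans_le (hg.mul_moment_mul_le_greenOp (Ioo_subset_Icc_self hx))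

end IsDensity

lemma moment_max_sub_sq (hg : IntervalIntegrable g volume 0 1) (hx : x ∈ Icc (0 : ℝ) 1) :
    moment (fun t => max (x - t) 0 ^ 2) g = ∫ t in 0..x, (x - t) ^ 2 * g t := by
  have hint (a b : ℝ) (ha : a ∈ uIcc (0 : ℝ) 1) (hb : b ∈ uIcc (0 : ℝ) 1) :
      IntervalIntegrable (fun t => max (x - t) 0 ^ 2 * g t) volume a b :=
    (hg.mono_set (uIcc_subset_uIcc ha hb)).continuousOn_mul (by fun_prop)
  have hx' : x ∈ uIcc (0 : ℝ) 1 := uIcc_of_le (zero_le_one' ℝ) ▸ hx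
  have hleft : ∫ t in 0..x, max (x - t) 0 ^ 2 * g t = ∫ t in 0..x, (x - t) ^ 2 * g t :=
    integral_congr fun t ht => by
      rw [uIcc_of_le hx.1] at ht
      simp only [max_eq_left (sub_nonneg.2 ht.2)]
  have hright : ∫ t in x..1, max (x - t) 0 ^ 2 * g t = ∫ _ in x..1, (0 : ℝ) :=
    integral_congr fun t ht => by
      rw [uIcc_of_le hx.2] at ht
      simp [max_eq_right (sub_nonpos.2 ht.1)]
  rw [moment, ← integral_add_adjacent_intervals (hint 0 x left_mem_uIcc hx')
    (hint x 1 hx' right_mem_uIcc), hleft, hright, intervalIntegral.integral_zero, add_zero]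

lemma greenOp_eq (hg : IntervalIntegrable g volume 0 1) (hx : x ∈ Icc (0 : ℝ) 1) :
    greenOp θ g x = θ * moment parabola g * x + initialCurvature θ g * x ^ 2 / 2
      - (∫ t in 0..x, (x - t) ^ 2 * g t) / 2 := by
  have hkernel : greenKernel θ x = fun t => θ * parabola x * parabola t
      + x ^ 2 / 2 * (1 - t) ^ 2 - 1 / 2 * max (x - t) 0 ^ 2 := by
    ext t; rw [greenKernel]; ring
  rw [greenOp, hkernel, moment_sub hg (by fun_prop) (by fun_prop),
    moment_add hg (by fun_prop) (by fun_prop), moment_const_mul, moment_const_mul,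
    moment_const_mul, moment_max_sub_sq hg hx, initialCurvature, parabola]
  ring

lemma greenOp_zero (θ : ℝ) (g : ℝ → ℝ) : greenOp θ g 0 = 0 := by
  refine (integral_congr (g := fun _ => 0) fun t ht => ?_).trans intervalIntegral.integral_zero
  rw [uIcc_of_le zero_le_one] at ht
  simp [greenKernel, parabola, ht.1]

lemma greenOp_one (θ : ℝ) (g : ℝ → ℝ) : greenOp θ g 1 = 0 := by
  refine (integral_congr (g := fun _ => 0) fun t ht => ?_).trans intervalIntegral.integral_zero
  rw [uIcc_of_le zero_le_one] at ht
  simp [greenKernel, parabola, ht.2]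

lemma continuousOn_greenOp (θ : ℝ) (hg : IntervalIntegrable g volume 0 1) :
    ContinuousOn (greenOp θ g) (Icc 0 1) := by
  have hint := continuousOn_integral_sub_sq_mul zero_le_one hg
  exact ContinuousOn.congr (by fun_prop) fun x hx => greenOp_eq hg hx

lemma greenSlope_one (θ : ℝ) (hg : IntervalIntegrable g volume 0 1) :
    θ * moment parabola g + initialCurvature θ g - ∫ t in 0..1, (1 - t) * g t =
      -((θ + 1) * moment parabola g) := by
  have hparabola : parabola = fun t => (1 - t) - (1 - t) ^ 2 := by
    ext t; rw [parabola]; ring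
  have hmoment := moment_sub hg (u := fun t => 1 - t) (v := fun t => (1 - t) ^ 2)
    (by fun_prop) (by fun_prop)
  rw [← hparabola] at hmoment
  rw [initialCurvature]
  change _ - moment (fun t => 1 - t) g = _
  linarith

lemma hasThreeDerivs_greenOp (θ : ℝ) (hg : IntervalIntegrable g volume 0 1)
    (hgc : ContinuousOn g (Ioo 0 1)) :
    HasThreeDerivs 0 1 (greenOp θ g)
      (fun x => θ * moment parabola g + initialCurvature θ g * x - ∫ t in 0..x, (x - t) * g t)
      (fun x => initialCurvature θ g - ∫ t in 0..x, g t) (fun x => -g x) := by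
  have h := hasThreeDerivs_iteratedPrimitive zero_le_one hg hgc
  have hc₁ := h.continuousOn₁
  have hc₂ := h.continuousOn₂
  refine ⟨continuousOn_greenOp θ hg, by fun_prop, by fun_prop, fun x hx => ?_, fun x hx => ?_,
    fun x hx => (h.hasDerivAt₂ x hx).const_sub _, hg.neg⟩
  · have hid := hasDerivAt_id x
    refine HasDerivAt.congr_of_eventuallyEq (HasDerivAt.congr_deriv
      (((hid.const_mul (θ * moment parabola g)).add
        (((hid.pow 2).const_mul (initialCurvature θ g)).div_const 2)).sub (h.hasDerivAt₀ x hx)) ?_)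
      (mem_of_superset (Icc_mem_nhds hx.1 hx.2) fun y hy => greenOp_eq hg hy)
    simp only [id]
    ring
  · exact ((((hasDerivAt_id x).const_mul _).const_add _).sub (h.hasDerivAt₁ x hx)).congr_deriv
      (by ring)

end GreenKernel

section FixedPoint

open scoped BoundedContinuousFunction

variable {p θ θ' d x : ℝ} {g h : ℝ → ℝ}

/-- A density `g` on `(0, 1)` such that `F = greenOp θ g` solves `-F''' = F ^ p`. -/
structure IsHump (p θ : ℝ) (g : ℝ → ℝ) : Prop extends IsDensity g where
  eq_rpow : ∀ x ∈ Ioo (0 : ℝ) 1, g x = greenOp θ g x ^ p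

/-- The density `(parabola · e^W) ^ p`, where `W` is a function of the logit `log (t / (1 - t))`. -/
noncomputable def logitDensity (p : ℝ) (W : ℝ → ℝ) (t : ℝ) : ℝ :=
  parabola t ^ p * Real.exp (p * W (Real.log (t / (1 - t))))

lemma sigmoid_mem_Ioo (y : ℝ) : Real.sigmoid y ∈ Ioo (0 : ℝ) 1 :=
  ⟨Real.sigmoid_pos y, Real.sigmoid_lt_one y⟩

lemma log_sigmoid_div_one_sub_sigmoid (y : ℝ) :
    Real.log (Real.sigmoid y / (1 - Real.sigmoid y)) = y := by
  rw [← Real.sigmoid_neg, ← Real.sigmoid_mul_rexp_neg, ← div_div, div_self (Real.sigmoid_pos y).ne',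
    one_div, ← Real.exp_neg, neg_neg, Real.log_exp]

lemma logitDensity_sigmoid (p : ℝ) (W : ℝ → ℝ) (y : ℝ) :
    logitDensity p W (Real.sigmoid y) = (parabola (Real.sigmoid y) * Real.exp (W y)) ^ p := by
  rw [logitDensity, log_sigmoid_div_one_sub_sigmoid,
    Real.mul_rpow (parabola_pos (sigmoid_mem_Ioo y)).le (Real.exp_pos _).le, ← Real.exp_mul,
    mul_comm p]

lemma intervalIntegrable_parabola_rpow (hp : -1 < p) :
    IntervalIntegrable (fun t => parabola t ^ p) volume 0 1 := by
  have hfirst : IntervalIntegrable (fun t => parabola t ^ p) volume 0 (1 / 2) := by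
    have hcont : ContinuousOn (fun t : ℝ => (1 - t) ^ p) (uIcc 0 (1 / 2)) := by
      rw [uIcc_of_le (by norm_num)]
      exact ContinuousOn.rpow_const (by fun_prop) fun t ht => Or.inl (by linarith [ht.2])
    refine ((intervalIntegrable_rpow' hp).mul_continuousOn hcont).congr_ae ?_
    rw [uIoc_of_le (by norm_num)]
    filter_upwards [self_mem_ae_restrict measurableSet_Ioc] with t ht
    exact (Real.mul_rpow ht.1.le (by linarith [ht.2])).symm
  have hsymm (t : ℝ) : parabola (1 - t) = parabola t := by unfold parabola; ring
  have hsecond := (hfirst.comp_sub_left 1).symm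
  simp only [hsymm, sub_zero, sub_half] at hsecond
  exact hfirst.trans hsecond

lemma isDensity_logitDensity (hp : -1 < p) (W : ℝ →ᵇ ℝ) : IsDensity (logitDensity p W) where
  intervalIntegrable := by
    have hpow := intervalIntegrable_parabola_rpow hp
    rw [intervalIntegrable_iff] at hpow ⊢
    refine hpow.mul_bdd (c := Real.exp (|p| * ‖W‖)) ?_ (Eventually.of_forall fun t => ?_)
    · have hW := W.continuous.measurable
      exact Measurable.aestronglyMeasurable (by fun_prop)
    · rw [Real.norm_eq_abs, Real.abs_exp, Real.exp_le_exp]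
      refine (le_abs_self _).trans ?_
      rw [abs_mul]
      exact mul_le_mul_of_nonneg_left (W.norm_coe_le_norm _) (abs_nonneg _)
  pos := fun _ ht => mul_pos (Real.rpow_pos_of_pos (parabola_pos ht) _) (Real.exp_pos _)

lemma logitDensity_le_exp_mul (p : ℝ) (V W : ℝ →ᵇ ℝ) {t : ℝ} (ht : t ∈ Ioo (0 : ℝ) 1) :
    logitDensity p V t ≤ Real.exp (|p| * dist V W) * logitDensity p W t := by
  rw [logitDensity, logitDensity, mul_left_comm, ← Real.exp_add]
  refine mul_le_mul_of_nonneg_left (Real.exp_le_exp.2 ?_) (Real.rpow_nonneg (parabola_pos ht).le _)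
  set y := Real.log (t / (1 - t))
  have hdist : |p * (V y - W y)| ≤ |p| * dist V W := by
    rw [abs_mul, ← Real.dist_eq]
    exact mul_le_mul_of_nonneg_left (V.dist_coe_le_dist y) (abs_nonneg _)
  linarith [(le_abs_self _).trans hdist]

lemma IsDensity.greenOp_le_exp_mul (hg : IsDensity g) (hx : x ∈ Icc (0 : ℝ) 1) (l l' : ℝ) :
    greenOp (Real.exp l) g x ≤ Real.exp |l - l'| * greenOp (Real.exp l') g x := by
  rw [greenOp, greenOp, ← moment_const_mul]
  refine hg.moment_mono (by fun_prop) (by fun_prop) fun t ht => ?_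
  have ht' := Ioo_subset_Icc_self ht
  have hexp : Real.exp l ≤ Real.exp |l - l'| * Real.exp l' := by
    rw [← Real.exp_add, Real.exp_le_exp]
    linarith [le_abs_self (l - l')]
  have hmain := mul_le_mul_of_nonneg_right hexp
    (mul_nonneg (parabola_nonneg hx) (parabola_nonneg ht'))
  have hrest := le_mul_of_one_le_left (greenKernel_nonneg le_rfl hx ht')
    (Real.one_le_exp (abs_nonneg (l - l')))
  simp only [greenKernel, zero_mul, zero_add] at hrest ⊢
  linarith

/-- The function `log (F / parabola)` of the logit variable, with `F = greenOp θ g`. -/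
noncomputable def logProfile (hg : IsDensity g) (hθ : 0 < θ) : ℝ →ᵇ ℝ :=
  BoundedContinuousFunction.ofNormedAddCommGroup
    (fun y => Real.log (greenOp θ g (Real.sigmoid y) / parabola (Real.sigmoid y)))
    (by
      have hgreen : Continuous fun y => greenOp θ g (Real.sigmoid y) :=
        (continuousOn_greenOp θ hg.intervalIntegrable).comp_continuous continuous_sigmoid
          fun y => Ioo_subset_Icc_self (sigmoid_mem_Ioo y)
      refine (hgreen.div (continuous_parabola.comp continuous_sigmoid) fun y => ?_).log fun y => ?_
      · exact (parabola_pos (sigmoid_mem_Ioo y)).ne'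
      · exact (div_pos (hg.greenOp_pos hθ (sigmoid_mem_Ioo y))
          (parabola_pos (sigmoid_mem_Ioo y))).ne')
    (max |Real.log (θ * moment parabola g)| |Real.log ((θ + 1) * moment parabola g)|)
    (fun y => by
      have hy := sigmoid_mem_Ioo y
      have hlower := hg.mul_moment_mul_le_greenOp (θ := θ) (Ioo_subset_Icc_self hy)
      have hupper := hg.greenOp_le (θ := θ) (Ioo_subset_Icc_self hy)
      rw [← le_div_iff₀ (parabola_pos hy)] at hlower
      rw [← div_le_iff₀ (parabola_pos hy)] at hupper
      have hpos : 0 < θ * moment parabola g :=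
        mul_pos hθ (hg.moment_pos continuous_parabola fun _ => parabola_pos)
      exact abs_le_max_abs_abs (Real.log_le_log hpos hlower)
        (Real.log_le_log (hpos.trans_le hlower) hupper))

lemma exp_logProfile (hg : IsDensity g) (hθ : 0 < θ) (y : ℝ) :
    parabola (Real.sigmoid y) * Real.exp (logProfile hg hθ y) = greenOp θ g (Real.sigmoid y) := by
  have hy := sigmoid_mem_Ioo y
  change _ * Real.exp (Real.log _) = _
  rw [Real.exp_log (div_pos (hg.greenOp_pos hθ hy) (parabola_pos hy)),
    mul_div_cancel₀ _ (parabola_pos hy).ne']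

lemma logProfile_le (hg : IsDensity g) (hh : IsDensity h) (hθ : 0 < θ) (hθ' : 0 < θ')
    (hle : ∀ x ∈ Icc (0 : ℝ) 1, greenOp θ g x ≤ Real.exp d * greenOp θ' h x) (y : ℝ) :
    logProfile hg hθ y ≤ d + logProfile hh hθ' y := by
  have hy := sigmoid_mem_Ioo y
  rw [← Real.exp_le_exp, Real.exp_add, ← mul_le_mul_iff_right₀ (parabola_pos hy), mul_left_comm,
    exp_logProfile, exp_logProfile]
  exact hle _ (Ioo_subset_Icc_self hy)

lemma dist_logProfile_le (hg : IsDensity g) (hh : IsDensity h) (hθ : 0 < θ) (hθ' : 0 < θ')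
    (hd : 0 ≤ d) (hle : ∀ x ∈ Icc (0 : ℝ) 1, greenOp θ g x ≤ Real.exp d * greenOp θ' h x)
    (hge : ∀ x ∈ Icc (0 : ℝ) 1, greenOp θ' h x ≤ Real.exp d * greenOp θ g x) :
    dist (logProfile hg hθ) (logProfile hh hθ') ≤ d := by
  refine (BoundedContinuousFunction.dist_le hd).2 fun y => ?_
  rw [Real.dist_eq, abs_sub_le_iff]
  exact ⟨sub_le_iff_le_add.2 (logProfile_le hg hh hθ hθ' hle y),
    sub_le_iff_le_add.2 (logProfile_le hh hg hθ' hθ hge y)⟩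

/-- The map `W ↦ log (F / parabola)` with `F = greenOp θ ((parabola · e^W) ^ p)`, whose fixed points
are the humps. -/
noncomputable def humpMap (hp : -1 < p) (hθ : 0 < θ) (W : ℝ →ᵇ ℝ) : ℝ →ᵇ ℝ :=
  logProfile (isDensity_logitDensity hp W) hθ

lemma isHump_of_isFixedPt (hp : -1 < p) (hθ : 0 < θ) {W : ℝ →ᵇ ℝ}
    (hW : IsFixedPt (humpMap hp hθ) W) : IsHump p θ (logitDensity p W) where
  toIsDensity := isDensity_logitDensity hp W
  eq_rpow := fun x hx => by
    obtain ⟨y, rfl⟩ := Real.range_sigmoid ▸ hx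
    have hfixed : logProfile (isDensity_logitDensity hp W) hθ = W := hW
    rw [← exp_logProfile (isDensity_logitDensity hp W) hθ, hfixed, logitDensity_sigmoid]

lemma dist_humpMap_le (hp : -1 < p) (hθ : 0 < θ) (V W : ℝ →ᵇ ℝ) :
    dist (humpMap hp hθ V) (humpMap hp hθ W) ≤ |p| * dist V W := by
  have hle (V W : ℝ →ᵇ ℝ) (x) (hx : x ∈ Icc (0 : ℝ) 1) : greenOp θ (logitDensity p V) x ≤
      Real.exp (|p| * dist V W) * greenOp θ (logitDensity p W) x :=
    (isDensity_logitDensity hp V).moment_le_const_mul (isDensity_logitDensity hp W) (by fun_prop)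
      (fun t ht => greenKernel_nonneg hθ.le hx (Ioo_subset_Icc_self ht))
      fun t ht => logitDensity_le_exp_mul p V W ht
  exact dist_logProfile_le _ _ hθ hθ (by positivity) (hle V W) (dist_comm V W ▸ hle W V)

lemma dist_humpMap_param_le (hp : -1 < p) (W : ℝ →ᵇ ℝ) (l l' : ℝ) :
    dist (humpMap hp (Real.exp_pos l) W) (humpMap hp (Real.exp_pos l') W) ≤ |l - l'| := by
  have hle (l l' : ℝ) (x) (hx : x ∈ Icc (0 : ℝ) 1) :=
    (isDensity_logitDensity hp W).greenOp_le_exp_mul hx l l'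
  exact dist_logProfile_le _ _ _ _ (abs_nonneg _) (hle l l') (abs_sub_comm l l' ▸ hle l' l)

lemma contractingWith_humpMap (hp : |p| < 1) (hθ : 0 < θ) :
    ContractingWith ‖p‖₊ (humpMap (abs_lt.1 hp).1 hθ) :=
  ⟨NNReal.coe_lt_coe.1 hp, LipschitzWith.of_dist_le_mul (dist_humpMap_le _ hθ)⟩

lemma exists_isHump_family (hp : |p| < 1) : ∃ (G : ℝ → ℝ → ℝ) (C : ℝ),
    (∀ l, IsHump p (Real.exp l) (G l)) ∧
      ∀ l l', ∀ t ∈ Ioo (0 : ℝ) 1, G l t ≤ Real.exp (C * |l - l'|) * G l' t := by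
  have hp' := (abs_lt.1 hp).1
  have hcontr (l : ℝ) := contractingWith_humpMap hp (Real.exp_pos l)
  let W (l : ℝ) : ℝ →ᵇ ℝ := (hcontr l).fixedPoint
  have hdist (l l' : ℝ) : dist (W l) (W l') ≤ |l - l'| / (1 - |p|) :=
    (hcontr l).fixedPoint_lipschitz_in_map (hcontr l')
      fun z => dist_humpMap_param_le hp' z l l'
  refine ⟨fun l => logitDensity p (W l), |p| / (1 - |p|),
    fun l => isHump_of_isFixedPt hp' _ (hcontr l).fixedPoint_isFixedPt, fun l l' t ht =>
      (logitDensity_le_exp_mul p (W l) (W l') ht).trans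
        (mul_le_mul_of_nonneg_right (Real.exp_le_exp.2 ?_)
          ((isDensity_logitDensity hp' (W l')).pos t ht).le)⟩
  rw [div_mul_eq_mul_div, mul_div_assoc]
  exact mul_le_mul_of_nonneg_left (hdist l l') (abs_nonneg p)

lemma IsHump.continuousOn (hg : IsHump p θ g) (hθ : 0 < θ) : ContinuousOn g (Ioo 0 1) :=
  (((continuousOn_greenOp θ hg.intervalIntegrable).mono Ioo_subset_Icc_self).rpow_const
    fun _ hx => Or.inl (hg.greenOp_pos hθ hx).ne').congr hg.eq_rpow

end FixedPoint

section Matching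

variable {n k θ : ℝ} {g : ℝ → ℝ}

/-- The amount by which `F = greenOp θ g` fails the matching condition
`F'' 1 = -((θ + 1) / θ) ^ k * F'' 0`. -/
noncomputable def matchingDefect (k θ : ℝ) (g : ℝ → ℝ) : ℝ :=
  (1 + ((θ + 1) / θ) ^ k) * initialCurvature θ g - moment 1 g

lemma IsHump.exists_isOscSol (hg : IsHump (1 - n) θ g) (hθ : 0 < θ) (hn₀ : 0 < n) (hn₃ : n < 3)
    (hmatch : matchingDefect ((3 - 2 * n) / (3 - n)) θ g = 0) :
    ∃ (φ : ℝ → ℝ) (T : ℝ), 0 < T ∧ IsOscSol n φ ∧ Periodic φ T ∧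
      (∃ s, 0 < φ s) ∧ ∃ s, φ s < 0 := by
  have hμ : 0 < 3 / n - 1 := sub_pos.2 ((one_lt_div hn₀).2 hn₃)
  have ha : 1 < (θ + 1) / θ := (one_lt_div hθ).2 (lt_add_one θ)
  set a := (θ + 1) / θ with ha_def
  have hexp₁ : Real.exp ((3 / n - 1) * (Real.log a / (3 / n - 1))) = a := by
    rw [mul_div_cancel₀ _ hμ.ne', Real.exp_log (one_pos.trans ha)]
  have hexp₂ : Real.exp ((3 / n - 2) * (Real.log a / (3 / n - 1))) =
      a ^ ((3 - 2 * n) / (3 - n)) := by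
    have hn : 3 - n ≠ 0 := (sub_pos.2 hn₃).ne'
    have hquot : (3 / n - 2) / (3 / n - 1) = (3 - 2 * n) / (3 - n) := by
      rw [← mul_div_mul_left _ _ hn₀.ne']
      field_simp
    rw [Real.rpow_def_of_pos (one_pos.trans ha), ← hquot, mul_div_left_comm]
  refine (hasThreeDerivs_greenOp θ hg.intervalIntegrable
    (hg.continuousOn hθ)).exists_isOscSol_of_boundary hn₀.ne' (div_pos (Real.log_pos ha) hμ)
    (greenOp_zero θ g) (greenOp_one θ g) ?_ ?_ (fun x hx => hg.greenOp_pos hθ hx)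
    fun x hx => congrArg Neg.neg (hg.eq_rpow x hx)
  · have haθ : a * θ = θ + 1 := div_mul_cancel₀ _ hθ.ne'
    rw [hexp₁, mul_one, greenSlope_one θ hg.intervalIntegrable, ← haθ]
    simp only [intervalIntegral.integral_same]
    ring
  · rw [matchingDefect, moment_one, ← ha_def] at hmatch
    rw [hexp₂, intervalIntegral.integral_same]
    linarith

end Matching

section APriori

variable {p q k θ x m M : ℝ} {g : ℝ → ℝ}

lemma le_rpow_inv_of_le_mul_rpow (hx : 0 < x) (hM : 0 ≤ M) (hp : p < 1) (h : x ≤ M * x ^ p) :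
    x ≤ M ^ (1 - p)⁻¹ := by
  rw [Real.le_rpow_inv_iff_of_pos hx.le hM (sub_pos.2 hp), Real.rpow_sub hx, Real.rpow_one]
  exact div_le_of_le_mul₀ (Real.rpow_nonneg hx.le p) hM h

lemma rpow_inv_le_of_mul_rpow_le (hx : 0 < x) (hm : 0 ≤ m) (hp : p < 1) (h : m * x ^ p ≤ x) :
    m ^ (1 - p)⁻¹ ≤ x := by
  rw [Real.rpow_inv_le_iff_of_pos hm hx.le (sub_pos.2 hp), Real.rpow_sub hx, Real.rpow_one]
  exact (le_div_iff₀ (Real.rpow_pos_of_pos hx p)).2 h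

lemma rpow_le_two_mul_two_mul_rpow (hx : 0 < x) (hp : -1 ≤ p) : x ^ p ≤ 2 * (2 * x) ^ p := by
  rw [Real.mul_rpow zero_le_two hx.le, ← mul_assoc]
  refine le_mul_of_one_le_left (by positivity) ?_
  rw [mul_comm, ← Real.rpow_add_one two_ne_zero]
  exact Real.one_le_rpow one_le_two (by linarith)

lemma two_mul_rpow_le_two_mul_rpow (hx : 0 < x) (hp : p ≤ 1) : (2 * x) ^ p ≤ 2 * x ^ p := by
  rw [Real.mul_rpow zero_le_two hx.le]
  exact mul_le_mul_of_nonneg_right (Real.rpow_le_self_of_one_le one_le_two hp) (by positivity)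

lemma integral_parabola_sq : ∫ t in 0..1, parabola t ^ 2 = 1 / 30 := by
  have hexpand (t : ℝ) : parabola t ^ 2 = t ^ 2 - 2 * t ^ 3 + t ^ 4 := by unfold parabola; ring
  have hint {u : ℝ → ℝ} (hu : Continuous u) : IntervalIntegrable u volume 0 1 :=
    hu.intervalIntegrable 0 1
  simp only [hexpand]
  rw [intervalIntegral.integral_add (hint (by fun_prop)) (hint (by fun_prop)),
    intervalIntegral.integral_sub (hint (by fun_prop)) (hint (by fun_prop)),
    intervalIntegral.integral_const_mul, integral_pow, integral_pow, integral_pow]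
  norm_num

lemma isDensity_parabola_rpow (hq : -1 < q) : IsDensity fun t => parabola t ^ q where
  intervalIntegrable := intervalIntegrable_parabola_rpow hq
  pos := fun _ ht => Real.rpow_pos_of_pos (parabola_pos ht) q

namespace IsDensity

lemma moment_one_pos (hg : IsDensity g) : 0 < moment 1 g :=
  hg.moment_pos continuous_one fun _ _ => one_pos

lemma moment_parabola_pos (hg : IsDensity g) : 0 < moment parabola g :=
  hg.moment_pos continuous_parabola fun _ => parabola_pos

lemma moment_parabola_sq_pos (hg : IsDensity g) : 0 < moment (fun t => parabola t ^ 2) g :=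
  hg.moment_pos (by fun_prop) fun _ ht => pow_pos (parabola_pos ht) 2

lemma moment_parabola_le_moment_id (hg : IsDensity g) : moment parabola g ≤ moment id g :=
  hg.moment_mono continuous_parabola continuous_id fun _ ht => parabola_le_left ht.1.le

lemma moment_parabola_le_moment_one (hg : IsDensity g) : moment parabola g ≤ moment 1 g :=
  hg.moment_mono continuous_parabola continuous_one
    fun _ ht => parabola_le_one (Ioo_subset_Icc_self ht)

lemma initialCurvature_le (hg : IsDensity g) (θ : ℝ) :
    initialCurvature θ g ≤ moment 1 g - 2 * θ * moment parabola g :=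
  sub_le_sub_right (hg.moment_mono (by fun_prop) continuous_one fun t ht =>
    pow_le_one₀ (sub_nonneg.2 ht.2.le) (sub_le_self 1 ht.1.le)) _

lemma moment_parabola_sq_sub_le_initialCurvature (hg : IsDensity g) (θ : ℝ) :
    moment (fun t => parabola t ^ 2) g - 2 * θ * moment parabola g ≤ initialCurvature θ g :=
  sub_le_sub_right (hg.moment_mono (by fun_prop) (by fun_prop) fun _ ht =>
    pow_le_pow_left₀ (parabola_pos ht).le (parabola_le_one_sub ht.2.le) 2) _

lemma moment_one_sub_le_initialCurvature (hg : IsDensity g) (hθ : θ ≤ 1) :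
    moment 1 g - 4 * moment id g ≤ initialCurvature θ g := by
  have hsq : moment 1 g - 2 * moment id g ≤ moment (fun t => (1 - t) ^ 2) g := by
    rw [← moment_const_mul, ← moment_sub hg.intervalIntegrable (by fun_prop) (by fun_prop)]
    refine hg.moment_mono (by fun_prop) (by fun_prop) fun t _ => ?_
    simp only [Pi.one_apply, id]
    linarith [sq_nonneg t]
  have hslope : θ * moment parabola g ≤ moment id g :=
    (mul_le_of_le_one_left hg.moment_parabola_pos.le hθ).trans hg.moment_parabola_le_moment_id
  rw [initialCurvature]
  linarith

end IsDensity

namespace IsHump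

lemma le_rpow_of_nonneg (hg : IsHump p θ g) (hθ : 0 < θ) (hp : 0 ≤ p) (hx : x ∈ Ioo (0 : ℝ) 1)
    (h : greenOp θ g x ≤ M) : g x ≤ M ^ p :=
  hg.eq_rpow x hx ▸ Real.rpow_le_rpow (hg.greenOp_pos hθ hx).le h hp

lemma rpow_le_of_nonneg (hg : IsHump p θ g) (hp : 0 ≤ p) (hx : x ∈ Ioo (0 : ℝ) 1) (hm : 0 ≤ m)
    (h : m ≤ greenOp θ g x) : m ^ p ≤ g x :=
  hg.eq_rpow x hx ▸ Real.rpow_le_rpow hm h hp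

lemma le_rpow_of_nonpos (hg : IsHump p θ g) (hp : p ≤ 0) (hx : x ∈ Ioo (0 : ℝ) 1) (hm : 0 < m)
    (h : m ≤ greenOp θ g x) : g x ≤ m ^ p :=
  hg.eq_rpow x hx ▸ Real.rpow_le_rpow_of_nonpos hm h hp

lemma rpow_le_of_nonpos (hg : IsHump p θ g) (hθ : 0 < θ) (hp : p ≤ 0) (hx : x ∈ Ioo (0 : ℝ) 1)
    (h : greenOp θ g x ≤ M) : M ^ p ≤ g x :=
  hg.eq_rpow x hx ▸ Real.rpow_le_rpow_of_nonpos (hg.greenOp_pos hθ hx) h hp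

lemma mul_parabola_le_greenOp_and_le (hg : IsHump p θ g) (hθ : 1 ≤ θ) (hx : x ∈ Ioo (0 : ℝ) 1) :
    θ * moment parabola g * parabola x ≤ greenOp θ g x ∧
      greenOp θ g x ≤ 2 * (θ * moment parabola g) * parabola x := by
  refine ⟨hg.mul_moment_mul_le_greenOp (Ioo_subset_Icc_self hx),
    (hg.greenOp_le (Ioo_subset_Icc_self hx)).trans
      (mul_le_mul_of_nonneg_right ?_ (parabola_pos hx).le)⟩
  rw [← mul_assoc]
  exact mul_le_mul_of_nonneg_right (by linarith) hg.moment_parabola_pos.le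

lemma exists_mul_parabola_rpow_le (hg : IsHump p θ g) (hp : |p| < 1) (hθ : 1 ≤ θ) :
    ∃ m > 0, ∀ x ∈ Ioo (0 : ℝ) 1, m * parabola x ^ p ≤ g x ∧ g x ≤ 2 * m * parabola x ^ p := by
  obtain ⟨hp_lower, hp_upper⟩ := abs_lt.1 hp
  have hθ₀ : 0 < θ := one_pos.trans_le hθ
  have hU : 0 < θ * moment parabola g := mul_pos hθ₀ hg.moment_parabola_pos
  have hbound (x) (hx : x ∈ Ioo (0 : ℝ) 1) := hg.mul_parabola_le_greenOp_and_le hθ hx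
  set U := θ * moment parabola g
  rcases le_total p 0 with hp₀ | hp₀
  · refine ⟨(2 * U) ^ p, by positivity, fun x hx => ?_⟩
    have hx' := parabola_pos hx
    rw [← Real.mul_rpow (by positivity) hx'.le]
    refine ⟨hg.rpow_le_of_nonpos hθ₀ hp₀ hx (hbound x hx).2,
      (hg.le_rpow_of_nonpos hp₀ hx (by positivity) (hbound x hx).1).trans ?_⟩
    rw [Real.mul_rpow hU.le hx'.le]
    exact mul_le_mul_of_nonneg_right (rpow_le_two_mul_two_mul_rpow hU (by linarith)) (by positivity)
  · refine ⟨U ^ p, by positivity, fun x hx => ?_⟩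
    have hx' := parabola_pos hx
    rw [← Real.mul_rpow (by positivity) hx'.le]
    refine ⟨hg.rpow_le_of_nonneg hp₀ hx (by positivity) (hbound x hx).1,
      (hg.le_rpow_of_nonneg hθ₀ hp₀ hx (hbound x hx).2).trans ?_⟩
    rw [Real.mul_rpow (by positivity) hx'.le]
    exact mul_le_mul_of_nonneg_right (two_mul_rpow_le_two_mul_rpow hU hp_upper.le) (by positivity)

lemma moment_one_mul_le (hg : IsHump p θ g) (hp : |p| < 1) (hθ : 1 ≤ θ) :
    moment 1 g * moment parabola (fun t => parabola t ^ p) ≤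
      2 * moment 1 (fun t => parabola t ^ p) * moment parabola g := by
  have hd := isDensity_parabola_rpow (abs_lt.1 hp).1
  obtain ⟨m, hm, hbound⟩ := hg.exists_mul_parabola_rpow_le hp hθ
  have hupper : moment 1 g ≤ 2 * m * moment 1 (fun t => parabola t ^ p) :=
    hg.moment_le_const_mul hd continuous_one (fun _ _ => zero_le_one) fun t ht => (hbound t ht).2
  have hlower : moment parabola (fun t => parabola t ^ p) ≤ m⁻¹ * moment parabola g :=
    hd.moment_le_const_mul hg.toIsDensity continuous_parabola (fun t ht => (parabola_pos ht).le)
      fun t ht => (le_inv_mul_iff₀ hm).2 (hbound t ht).1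
  have hone := hd.moment_one_pos
  calc moment 1 g * moment parabola (fun t => parabola t ^ p)
      ≤ 2 * m * moment 1 (fun t => parabola t ^ p) * (m⁻¹ * moment parabola g) :=
        mul_le_mul hupper hlower hd.moment_parabola_pos.le (by positivity)
    _ = 2 * moment 1 (fun t => parabola t ^ p) * moment parabola g := by field_simp

end IsHump

lemma exists_forall_matchingDefect_neg (hp : |p| < 1) :
    ∃ θ > 0, ∀ k g, IsHump p θ g → matchingDefect k θ g < 0 := by
  have hd := isDensity_parabola_rpow (abs_lt.1 hp).1
  have hB := hd.moment_parabola_pos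
  set A := moment 1 fun t => parabola t ^ p
  set B := moment parabola fun t => parabola t ^ p
  refine ⟨max 1 (A / B), by positivity, fun k g hg => ?_⟩
  set θ := max 1 (A / B)
  have hmass : moment 1 g ≤ 2 * θ * moment parabola g := by
    have hAB : A ≤ θ * B := (div_le_iff₀ hB).1 (le_max_right _ _)
    refine le_of_mul_le_mul_right ((hg.moment_one_mul_le hp (le_max_left _ _)).trans ?_) hB
    linarith [mul_le_mul_of_nonneg_right hAB hg.moment_parabola_pos.le]
  have hcurv : initialCurvature θ g ≤ 0 := by linarith [hg.initialCurvature_le θ]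
  have hneg := mul_nonpos_of_nonneg_of_nonpos
    (by positivity : 0 ≤ 1 + ((θ + 1) / θ) ^ k) hcurv
  rw [matchingDefect]
  linarith [hg.moment_one_pos]

namespace IsHump

lemma moment_le_of_nonpos (hg : IsHump p θ g) (hθ : 0 ≤ θ) (hp : p ≤ 0) {w b : ℝ → ℝ}
    (hw : Continuous w) (hw₀ : ∀ t ∈ Ioo (0 : ℝ) 1, 0 ≤ w t) (hb : IntervalIntegrable b volume 0 1)
    (hle : ∀ t ∈ Ioo (0 : ℝ) 1, w t * (t * parabola t) ^ p ≤ b t) :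
    moment w g ≤ (moment (fun t => parabola t ^ 2) g / 2) ^ p * ∫ t in 0..1, b t := by
  have hJ := hg.moment_parabola_sq_pos
  set J := moment (fun t => parabola t ^ 2) g
  rw [← intervalIntegral.integral_const_mul]
  refine integral_mono_on_of_le_Ioo zero_le_one
    (hg.intervalIntegrable.continuousOn_mul hw.continuousOn) (hb.const_mul _) fun t ht => ?_
  have ht' : 0 < t * parabola t := mul_pos ht.1 (parabola_pos ht)
  calc w t * g t
      ≤ w t * (J / 2 * (t * parabola t)) ^ p := mul_le_mul_of_nonneg_left
        (hg.le_rpow_of_nonpos hp ht (by positivity)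
          (hg.moment_sq_mul_le_greenOp hθ (Ioo_subset_Icc_self ht))) (hw₀ t ht)
    _ = (J / 2) ^ p * (w t * (t * parabola t) ^ p) := by
      rw [Real.mul_rpow (by positivity) ht'.le, mul_left_comm]
    _ ≤ (J / 2) ^ p * b t := mul_le_mul_of_nonneg_left (hle t ht) (by positivity)

lemma moment_id_le (hg : IsHump p θ g) (hθ : 0 ≤ θ) (hq : -1 < q) (hqp : q ≤ p) (hp : p ≤ 0) :
    moment id g ≤
      (moment (fun t => parabola t ^ 2) g / 2) ^ p * ∫ t in 0..1, parabola t ^ q := by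
  refine hg.moment_le_of_nonpos hθ hp continuous_id (fun t ht => ht.1.le)
    (intervalIntegrable_parabola_rpow hq) fun t ht => ?_
  have ht' := parabola_pos ht
  calc t * (t * parabola t) ^ p
      = t ^ (1 + p) * parabola t ^ p := by
        rw [Real.mul_rpow ht.1.le ht'.le, Real.rpow_one_add' ht.1.le (by linarith), mul_assoc]
    _ ≤ parabola t ^ p := mul_le_of_le_one_left (by positivity)
      (Real.rpow_le_one ht.1.le ht.2.le (by linarith))
    _ ≤ parabola t ^ q := Real.rpow_le_rpow_of_exponent_ge ht'
      (parabola_le_one (Ioo_subset_Icc_self ht)) hqp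

lemma moment_one_le (hg : IsHump p θ g) (hθ : 0 ≤ θ) (hp : -(1 / 2) < p) (hp₀ : p ≤ 0) :
    moment 1 g ≤
      (moment (fun t => parabola t ^ 2) g / 2) ^ p * ∫ t in 0..1, parabola t ^ (2 * p) := by
  refine hg.moment_le_of_nonpos hθ hp₀ continuous_one (fun _ _ => zero_le_one)
    (intervalIntegrable_parabola_rpow (by linarith)) fun t ht => ?_
  have ht' := parabola_pos ht
  rw [Pi.one_apply, one_mul, Real.rpow_mul ht'.le, Real.rpow_two, sq]
  exact Real.rpow_le_rpow_of_nonpos (by positivity)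
    (mul_le_mul_of_nonneg_right (parabola_le_left ht.1.le) ht'.le) hp₀

lemma rpow_le_mul_moment_parabola_sq (hg : IsHump p θ g) (hθ : 0 < θ) (hθ₁ : θ ≤ 1) (hp : p ≤ 0) :
    (2 * moment parabola g) ^ p ≤ 30 * moment (fun t => parabola t ^ 2) g := by
  have hP := hg.moment_parabola_pos
  have hone : IsDensity fun _ => (2 * moment parabola g) ^ p :=
    ⟨intervalIntegrable_const, fun _ _ => by positivity⟩
  have hle : moment (fun t => parabola t ^ 2) (fun _ => (2 * moment parabola g) ^ p) ≤
      moment (fun t => parabola t ^ 2) g :=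
    hone.moment_le_moment hg.toIsDensity (by fun_prop) (by fun_prop) fun t ht => by
      have ht' := Ioo_subset_Icc_self ht
      refine mul_le_mul_of_nonneg_left
        (hg.rpow_le_of_nonpos hθ hp ht ((hg.greenOp_le ht').trans ?_)) (sq_nonneg _)
      exact (mul_le_of_le_one_right (by positivity) (parabola_le_one ht')).trans
        (mul_le_mul_of_nonneg_right (by linarith) hP.le)
  rw [moment, intervalIntegral.integral_mul_const, integral_parabola_sq] at hle
  linarith

lemma mul_rpow_le_half_moment (hg : IsHump p θ g) (hθ : 0 < θ) (hθ₁ : θ ≤ 1) (hq : -1 < q)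
    (hqp : q ≤ p) (hp : p ≤ 0) (hM : 1 ≤ M) (hqM : ∫ t in 0..1, parabola t ^ q ≤ M) :
    (120 * M)⁻¹ * (moment (fun t => parabola t ^ 2) g / 2) ^ (p * p) ≤
      moment (fun t => parabola t ^ 2) g / 2 := by
  have hJ := hg.moment_parabola_sq_pos
  have hP := hg.moment_parabola_pos
  have hPM : moment parabola g ≤ (moment (fun t => parabola t ^ 2) g / 2) ^ p * M :=
    (hg.moment_parabola_le_moment_id.trans (hg.moment_id_le hθ.le hq hqp hp)).trans
      (mul_le_mul_of_nonneg_left hqM (by positivity))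
  have hPJ := hg.rpow_le_mul_moment_parabola_sq hθ hθ₁ hp
  set J := moment (fun t => parabola t ^ 2) g
  have hMp : (2 * M)⁻¹ ≤ (2 * M) ^ p := by
    rw [← Real.rpow_neg_one]
    exact Real.rpow_le_rpow_of_exponent_le (by linarith) (by linarith)
  have hcomb : (2 * M)⁻¹ * (J / 2) ^ (p * p) ≤ 30 * J :=
    calc (2 * M)⁻¹ * (J / 2) ^ (p * p)
        ≤ (2 * M) ^ p * (J / 2) ^ (p * p) := mul_le_mul_of_nonneg_right hMp (by positivity)
      _ = (2 * ((J / 2) ^ p * M)) ^ p := by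
        rw [Real.rpow_mul (by positivity), ← Real.mul_rpow (by positivity) (by positivity)]
        ring_nf
      _ ≤ (2 * moment parabola g) ^ p :=
        Real.rpow_le_rpow_of_nonpos (by positivity) (by linarith) hp
      _ ≤ 30 * J := hPJ
  rw [show (120 * M)⁻¹ = 60⁻¹ * (2 * M)⁻¹ by rw [← mul_inv]; ring_nf, mul_assoc]
  linarith

end IsHump

/-- If `g` were small then so would be `F`, and `g = F ^ p` would be large. -/
lemma exists_forall_le_half_moment (hq : -1 < q) (hq₀ : q ≤ 0) : ∃ c > 0, ∀ p θ g,
    q ≤ p → p ≤ 0 → 0 < θ → θ ≤ 1 → IsHump p θ g →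
      c ≤ moment (fun t => parabola t ^ 2) g / 2 := by
  set M := max 1 (∫ t in 0..1, parabola t ^ q)
  have hM : 1 ≤ M := le_max_left _ _
  refine ⟨(120 * M)⁻¹ ^ (1 - q * q)⁻¹, by positivity, fun p θ g hqp hp hθ hθ₁ hg => ?_⟩
  have hqq : q * q < 1 := by nlinarith
  have hpp : p * p ≤ q * q := by nlinarith
  refine le_trans (Real.rpow_le_rpow_of_exponent_ge (by positivity)
    (inv_le_one_of_one_le₀ (by linarith)) (inv_anti₀ (by linarith) (by linarith)))
    (rpow_inv_le_of_mul_rpow_le (half_pos hg.moment_parabola_sq_pos) (by positivity)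
      (hpp.trans_lt hqq) ?_)
  exact hg.mul_rpow_le_half_moment hθ hθ₁ hq hqp hp hM (le_max_right _ _)

lemma exists_forall_half_moment_rpow_le (hq : -1 < q) (hq₀ : q ≤ 0) : ∃ C > 0, ∀ p θ g,
    q ≤ p → p ≤ 0 → 0 < θ → θ ≤ 1 → IsHump p θ g →
      (moment (fun t => parabola t ^ 2) g / 2) ^ p ≤ C := by
  obtain ⟨c, hc, hle⟩ := exists_forall_le_half_moment hq hq₀
  refine ⟨(min c 1) ^ q, by positivity, fun p θ g hqp hp hθ hθ₁ hg => ?_⟩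
  exact (Real.rpow_le_rpow_of_nonpos (by positivity)
    ((min_le_left _ _).trans (hle p θ g hqp hp hθ hθ₁ hg)) hp).trans
    (Real.rpow_le_rpow_of_exponent_ge (by positivity) (min_le_right _ _) hqp)

lemma integral_parabola_rpow_pos (hq : -1 < q) : 0 < ∫ t in 0..1, parabola t ^ q :=
  moment_one (fun t => parabola t ^ q) ▸ (isDensity_parabola_rpow hq).moment_one_pos

lemma exists_forall_moment_id_le (hq : -1 < q) (hq₀ : q ≤ 0) : ∃ C > 0, ∀ p θ g,
    q ≤ p → p ≤ 0 → 0 < θ → θ ≤ 1 → IsHump p θ g → moment id g ≤ C := by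
  obtain ⟨C, hC, hle⟩ := exists_forall_half_moment_rpow_le hq hq₀
  have hK := integral_parabola_rpow_pos hq
  exact ⟨_, mul_pos hC hK, fun p θ g hqp hp hθ hθ₁ hg => (hg.moment_id_le hθ.le hq hqp hp).trans
    (mul_le_mul_of_nonneg_right (hle p θ g hqp hp hθ hθ₁ hg) hK.le)⟩

lemma exists_forall_moment_bounds_of_nonpos (hp : -(1 / 2) < p) (hp₀ : p ≤ 0) :
    ∃ c > 0, ∃ C > 0, ∀ θ g, 0 < θ → θ ≤ 1 → IsHump p θ g →
      c ≤ moment (fun t => parabola t ^ 2) g ∧ moment 1 g ≤ C := by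
  obtain ⟨c, hc, hlower⟩ := exists_forall_le_half_moment (by linarith) hp₀
  obtain ⟨C, hC, hupper⟩ := exists_forall_half_moment_rpow_le (by linarith) hp₀
  have hK := integral_parabola_rpow_pos (q := 2 * p) (by linarith)
  refine ⟨c, hc, _, mul_pos hC hK, fun θ g hθ hθ₁ hg => ⟨?_, ?_⟩⟩
  · linarith [hlower p θ g le_rfl hp₀ hθ hθ₁ hg]
  · exact (hg.moment_one_le hθ.le hp hp₀).trans
      (mul_le_mul_of_nonneg_right (hupper p θ g le_rfl hp₀ hθ hθ₁ hg) hK.le)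

lemma isDensity_mul_parabola_rpow (hp : 0 ≤ p) : IsDensity fun t => (t * parabola t) ^ p where
  intervalIntegrable := Continuous.intervalIntegrable
    (Continuous.rpow_const (by fun_prop) fun _ => Or.inr hp) 0 1
  pos := fun _ ht => Real.rpow_pos_of_pos (mul_pos ht.1 (parabola_pos ht)) p

namespace IsHump

lemma mul_rpow_le_half_moment_of_nonneg (hg : IsHump p θ g) (hθ : 0 ≤ θ) (hp : 0 ≤ p) :
    moment (fun t => parabola t ^ 2) (fun t => (t * parabola t) ^ p) / 2 *
      (moment (fun t => parabola t ^ 2) g / 2) ^ p ≤ moment (fun t => parabola t ^ 2) g / 2 := by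
  have hJ := hg.moment_parabola_sq_pos
  set J := moment (fun t => parabola t ^ 2) g
  have hle : moment (fun t => parabola t ^ 2) (fun t => (t * parabola t) ^ p) ≤
      ((J / 2) ^ p)⁻¹ * J :=
    (isDensity_mul_parabola_rpow hp).moment_le_const_mul hg.toIsDensity (by fun_prop)
      (fun _ _ => sq_nonneg _) fun t ht => by
        have ht' : 0 < t * parabola t := mul_pos ht.1 (parabola_pos ht)
        rw [le_inv_mul_iff₀ (by positivity), ← Real.mul_rpow (by positivity) ht'.le]
        exact hg.rpow_le_of_nonneg hp ht (by positivity)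
          (hg.moment_sq_mul_le_greenOp hθ (Ioo_subset_Icc_self ht))
  rw [le_inv_mul_iff₀ (by positivity)] at hle
  linarith

lemma moment_one_le_rpow (hg : IsHump p θ g) (hθ : 0 < θ) (hθ₁ : θ ≤ 1) (hp : 0 ≤ p) :
    moment 1 g ≤ (2 * moment 1 g) ^ p := by
  have hone := hg.moment_one_pos
  have hconst : IsDensity fun _ => (2 * moment 1 g) ^ p :=
    ⟨intervalIntegrable_const, fun _ _ => by positivity⟩
  calc moment 1 g
      ≤ moment 1 fun _ => (2 * moment 1 g) ^ p :=
        hg.moment_le_moment hconst continuous_one continuous_one fun t ht => by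
          have ht' := Ioo_subset_Icc_self ht
          refine mul_le_mul_of_nonneg_left
            (hg.le_rpow_of_nonneg hθ hp ht ((hg.greenOp_le ht').trans ?_)) zero_le_one
          exact (mul_le_of_le_one_right (by have := hg.moment_parabola_pos; positivity)
            (parabola_le_one ht')).trans (mul_le_mul (by linarith)
              hg.moment_parabola_le_moment_one hg.moment_parabola_pos.le zero_le_two)
    _ = (2 * moment 1 g) ^ p := by
      rw [moment_one fun _ => _, intervalIntegral.integral_const, sub_zero, one_smul]

end IsHump

lemma exists_forall_moment_bounds_of_nonneg (hp : 0 ≤ p) (hp₁ : p < 1) :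
    ∃ c > 0, ∃ C > 0, ∀ θ g, 0 < θ → θ ≤ 1 → IsHump p θ g →
      c ≤ moment (fun t => parabola t ^ 2) g ∧ moment 1 g ≤ C := by
  have hK := (isDensity_mul_parabola_rpow hp).moment_parabola_sq_pos
  set K := moment (fun t => parabola t ^ 2) fun t => (t * parabola t) ^ p
  refine ⟨(K / 2) ^ (1 - p)⁻¹, by positivity, (2 ^ p) ^ (1 - p)⁻¹, by positivity,
    fun θ g hθ hθ₁ hg => ⟨?_, ?_⟩⟩
  · have hJ := hg.moment_parabola_sq_pos
    linarith [rpow_inv_le_of_mul_rpow_le (half_pos hJ) (half_pos hK).le hp₁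
      (hg.mul_rpow_le_half_moment_of_nonneg hθ.le hp)]
  · refine le_rpow_inv_of_le_mul_rpow hg.moment_one_pos (by positivity) hp₁ ?_
    rw [← Real.mul_rpow zero_le_two hg.moment_one_pos.le]
    exact hg.moment_one_le_rpow hθ hθ₁ hp

lemma exists_matchingDefect_pos_of_neg_half_lt (hp : -(1 / 2) < p) (hp₁ : p < 1) (hk : 0 < k) :
    ∃ θ > 0, ∀ g, IsHump p θ g → 0 < matchingDefect k θ g := by
  obtain ⟨c, hc, C, hC, hbound⟩ := (le_total p 0).elim
    (exists_forall_moment_bounds_of_nonpos hp) (exists_forall_moment_bounds_of_nonneg · hp₁)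
  obtain ⟨R, hRk, hR₁, hRC⟩ := ((tendsto_rpow_atTop hk).eventually_ge_atTop (2 * C / c)).and
    ((eventually_ge_atTop 1).and (eventually_ge_atTop (4 * C / c))) |>.exists
  have hR : 0 < R := one_pos.trans_le hR₁
  refine ⟨R⁻¹, by positivity, fun g hg => ?_⟩
  obtain ⟨hJ, hmass⟩ := hbound R⁻¹ g (by positivity) (inv_le_one_of_one_le₀ hR₁) hg
  have hcurv : c / 2 ≤ initialCurvature R⁻¹ g := by
    have hslope : 2 * R⁻¹ * moment parabola g ≤ c / 2 := by
      rw [mul_assoc, inv_mul_eq_div, ← le_div_iff₀' zero_lt_two, div_le_iff₀ hR]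
      rw [div_le_iff₀ hc] at hRC
      linarith [hg.moment_parabola_le_moment_one]
    linarith [hg.moment_parabola_sq_sub_le_initialCurvature R⁻¹]
  have hratio : R ^ k ≤ ((R⁻¹ + 1) / R⁻¹) ^ k := by
    refine Real.rpow_le_rpow hR.le ?_ hk.le
    rw [add_div, div_self (inv_pos.2 hR).ne', one_div, inv_inv]
    linarith
  have hmain : (1 + 2 * C / c) * (c / 2) ≤ (1 + ((R⁻¹ + 1) / R⁻¹) ^ k) * initialCurvature R⁻¹ g :=
    mul_le_mul (by linarith) hcurv (by positivity) (by positivity)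
  have hval : (1 + 2 * C / c) * (c / 2) = c / 2 + C := by field_simp
  rw [matchingDefect]
  linarith

namespace IsHump

lemma inv_mul_inv_le (hg : IsHump p θ g) (hp : -1 < p) (hp' : p ≤ -(1 / 2)) (hθ : 0 < θ)
    (hM : 1 ≤ M) (hgM : moment 1 g ≤ M) (hx : x ∈ Ioo θ 1) : (2 * M)⁻¹ * x⁻¹ ≤ g x := by
  have hx₀ : 0 < x := hθ.trans hx.1
  have hxI : x ∈ Ioo (0 : ℝ) 1 := ⟨hx₀, hx.2⟩
  have hslope : θ * moment parabola g * parabola x ≤ x * M * x :=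
    mul_le_mul (mul_le_mul hx.1.le (hg.moment_parabola_le_moment_one.trans hgM)
      hg.moment_parabola_pos.le hx₀.le) (parabola_le_left hx₀.le) (parabola_pos hxI).le
      (by positivity)
  have hcurv : x ^ 2 / 2 * moment 1 g ≤ x ^ 2 / 2 * M :=
    mul_le_mul_of_nonneg_left hgM (by positivity)
  have hF : greenOp θ g x ≤ 2 * M * x ^ 2 := by
    nlinarith [hg.greenOp_le_add θ x, sq_nonneg x]
  refine le_trans ?_ (hg.rpow_le_of_nonpos hθ (by linarith) hxI hF)
  rw [Real.mul_rpow (by positivity) (by positivity), ← Real.rpow_two, ← Real.rpow_mul hx₀.le,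
    ← Real.rpow_neg_one, ← Real.rpow_neg_one]
  exact mul_le_mul (Real.rpow_le_rpow_of_exponent_le (by linarith) hp.le)
    (Real.rpow_le_rpow_of_exponent_ge hx₀ hx.2.le (by linarith)) (by positivity) (by positivity)

lemma lt_moment_one (hg : IsHump p θ g) (hp : -1 < p) (hp' : p ≤ -(1 / 2)) (hθ : 0 < θ)
    (hM : 1 ≤ M) (hθM : θ < Real.exp (-(2 * M ^ 2))) : M < moment 1 g := by
  by_contra! hgM
  have hθ₁ : θ < 1 := hθM.trans_le (Real.exp_le_one_iff.2 (by linarith [sq_nonneg M]))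
  have hθ_mem : θ ∈ uIcc (0 : ℝ) 1 := mem_uIcc.2 (Or.inl ⟨hθ.le, hθ₁.le⟩)
  have hint₀ : IntervalIntegrable g volume 0 θ :=
    hg.intervalIntegrable.mono_set (uIcc_subset_uIcc left_mem_uIcc hθ_mem)
  have hint₁ : IntervalIntegrable g volume θ 1 :=
    hg.intervalIntegrable.mono_set (uIcc_subset_uIcc hθ_mem right_mem_uIcc)
  have hinv : IntervalIntegrable (fun t => (2 * M)⁻¹ * t⁻¹) volume θ 1 :=
    (intervalIntegral.intervalIntegrable_inv (fun t ht => by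
      rw [uIcc_of_le hθ₁.le] at ht
      exact (hθ.trans_le ht.1).ne') continuousOn_id).const_mul _
  have hleft : 0 < ∫ t in 0..θ, g t := intervalIntegral_pos_of_pos_on hint₀
    (fun t ht => hg.pos t ⟨ht.1, ht.2.trans hθ₁⟩) hθ
  have hright : (2 * M)⁻¹ * -Real.log θ ≤ ∫ t in θ..1, g t := by
    rw [← Real.log_inv, ← one_div θ, ← integral_inv_of_pos hθ one_pos,
      ← intervalIntegral.integral_const_mul]
    exact integral_mono_on_of_le_Ioo hθ₁.le hinv hint₁ fun t ht =>
      hg.inv_mul_inv_le hp hp' hθ hM hgM ht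
  have hlog : 2 * M ^ 2 < -Real.log θ := by
    linarith [(Real.log_lt_iff_lt_exp hθ).2 hθM]
  have hM' : M < (2 * M)⁻¹ * -Real.log θ := by
    rw [lt_inv_mul_iff₀ (by positivity)]
    linarith
  rw [moment_one, ← integral_add_adjacent_intervals hint₀ hint₁] at hgM
  linarith

end IsHump

/-- As `θ → 0` the mass of `g` blows up by concentrating near `0`, so that the curvature, which is
its mass up to four times its first moment, becomes as large as the mass. -/
lemma exists_forall_matchingDefect_pos_of_le_neg_half (hq : -1 < q) (hq₀ : q ≤ 0) :
    ∃ θ > 0, ∀ p k g, q ≤ p → p ≤ -(1 / 2) → 1 / 2 ≤ ((θ + 1) / θ) ^ k → IsHump p θ g →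
      0 < matchingDefect k θ g := by
  obtain ⟨C, hC, hid⟩ := exists_forall_moment_id_le hq hq₀
  set M := max 1 (12 * C)
  have hM : 1 ≤ M := le_max_left _ _
  have hMC : 12 * C ≤ M := le_max_right _ _
  obtain ⟨θ, hθ, hθM⟩ := exists_between (Real.exp_pos (-(2 * M ^ 2)))
  have hθ₁ : θ ≤ 1 := hθM.le.trans (Real.exp_le_one_iff.2 (by linarith [sq_nonneg M]))
  refine ⟨θ, hθ, fun p k g hqp hp hk hg => ?_⟩
  have hmass := hg.lt_moment_one (hq.trans_le hqp) hp hθ hM hθM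
  have hT := hid p θ g hqp (by linarith) hθ hθ₁ hg
  have hcurv : moment 1 g - 4 * C ≤ initialCurvature θ g := by
    linarith [hg.moment_one_sub_le_initialCurvature hθ₁]
  have hmain : (1 + 1 / 2) * (moment 1 g - 4 * C) ≤
      (1 + ((θ + 1) / θ) ^ k) * initialCurvature θ g :=
    mul_le_mul (by linarith) hcurv (by linarith) (by positivity)
  rw [matchingDefect]
  linarith

end APriori

section Existence

variable {p k n θ : ℝ}

lemma continuous_of_le_exp_mul {f : ℝ → ℝ} {C : ℝ}
    (hf : ∀ l l', f l ≤ Real.exp (C * |l - l'|) * f l') : Continuous f := by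
  refine continuous_iff_continuousAt.2 fun l => ?_
  have hlower : Tendsto (fun l' => Real.exp (-(C * |l - l'|)) * f l) (𝓝 l) (𝓝 (f l)) := by
    have hcont : Continuous fun l' => Real.exp (-(C * |l - l'|)) * f l := by fun_prop
    simpa using hcont.tendsto l
  have hupper : Tendsto (fun l' => Real.exp (C * |l' - l|) * f l) (𝓝 l) (𝓝 (f l)) := by
    have hcont : Continuous fun l' => Real.exp (C * |l' - l|) * f l := by fun_prop
    simpa using hcont.tendsto l
  refine tendsto_of_tendsto_of_tendsto_of_le_of_le hlower hupper (fun l' => ?_) fun l' => hf l' l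
  simpa only [Real.exp_neg] using (inv_mul_le_iff₀ (Real.exp_pos _)).2 (hf l l')

lemma continuous_moment {G : ℝ → ℝ → ℝ} {C : ℝ} {u : ℝ → ℝ} (hG : ∀ l, IsDensity (G l))
    (hle : ∀ l l', ∀ t ∈ Ioo (0 : ℝ) 1, G l t ≤ Real.exp (C * |l - l'|) * G l' t)
    (hu : Continuous u) (hu₀ : ∀ t ∈ Ioo (0 : ℝ) 1, 0 ≤ u t) :
    Continuous fun l => moment u (G l) :=
  continuous_of_le_exp_mul fun l l' => (hG l).moment_le_const_mul (hG l') hu hu₀ (hle l l')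

lemma exists_matchingDefect_eq_zero (hp : |p| < 1) (hθ : 0 < θ)
    (hpos : ∀ g, IsHump p θ g → 0 < matchingDefect k θ g) :
    ∃ θ' > 0, ∃ g, IsHump p θ' g ∧ matchingDefect k θ' g = 0 := by
  obtain ⟨G, C, hG, hle⟩ := exists_isHump_family hp
  obtain ⟨θ₁, hθ₁, hneg⟩ := exists_forall_matchingDefect_neg hp
  obtain ⟨l₁, rfl⟩ : ∃ l, Real.exp l = θ₁ := ⟨Real.log θ₁, Real.exp_log hθ₁⟩
  obtain ⟨l₂, rfl⟩ : ∃ l, Real.exp l = θ := ⟨Real.log θ, Real.exp_log hθ⟩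
  have hG' (l) := (hG l).toIsDensity
  have hcont : Continuous fun l => matchingDefect k (Real.exp l) (G l) := by
    have hmass : Continuous fun l => moment 1 (G l) :=
      continuous_moment hG' hle continuous_one fun _ _ => zero_le_one
    have hparabola : Continuous fun l => moment parabola (G l) :=
      continuous_moment hG' hle continuous_parabola fun _ ht => (parabola_pos ht).le
    have hsq : Continuous fun l => moment (fun t => (1 - t) ^ 2) (G l) :=
      continuous_moment hG' hle (by fun_prop) fun _ _ => sq_nonneg _
    have hratio : Continuous fun l => ((Real.exp l + 1) / Real.exp l) ^ k :=
      Continuous.rpow_const (by fun_prop (disch := exact fun l => (Real.exp_pos l).ne'))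
        fun l => Or.inl (by positivity)
    unfold matchingDefect initialCurvature
    fun_prop
  obtain ⟨l, hl⟩ := mem_range_of_exists_le_of_exists_ge hcont (c := 0)
    ⟨l₁, (hneg k _ (hG l₁)).le⟩ ⟨l₂, (hpos _ (hG l₂)).le⟩
  exact ⟨Real.exp l, Real.exp_pos l, G l, hG l, hl⟩

lemma exists_isOscSol_of_matchingDefect_pos (hn₀ : 0 < n) (hn₂ : n < 2) (hθ : 0 < θ)
    (hpos : ∀ g, IsHump (1 - n) θ g → 0 < matchingDefect ((3 - 2 * n) / (3 - n)) θ g) :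
    ∃ (φ : ℝ → ℝ) (T : ℝ), 0 < T ∧ IsOscSol n φ ∧ Periodic φ T ∧
      (∃ s, 0 < φ s) ∧ ∃ s, φ s < 0 := by
  obtain ⟨θ', hθ', g, hg, hmatch⟩ :=
    exists_matchingDefect_eq_zero (abs_lt.2 ⟨by linarith, by linarith⟩) hθ hpos
  exact hg.exists_isOscSol hθ' hn₀ (by linarith) hmatch

lemma one_half_le_rpow {a : ℝ} (ha : 1 < a) (hn₂ : n ≤ 2)
    (hn : n ≤ 3 / 2 + 1 / (4 * Real.log a)) : 1 / 2 ≤ a ^ ((3 - 2 * n) / (3 - n)) := by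
  have hlog := Real.log_pos ha
  have hexponent : -(1 / 2) ≤ Real.log a * ((3 - 2 * n) / (3 - n)) := by
    have hn' : n - 3 / 2 ≤ 1 / (4 * Real.log a) := by linarith
    rw [le_div_iff₀ (by positivity)] at hn'
    rw [mul_div_assoc', le_div_iff₀ (by linarith)]
    linarith
  rw [Real.rpow_def_of_pos (one_pos.trans ha)]
  linarith [Real.add_one_le_exp (Real.log a * ((3 - 2 * n) / (3 - n)))]

lemma seven_fourths_lt_nine_div : (7 / 4 : ℝ) < 9 / (3 + Real.sqrt 3) := by
  have hsqrt : Real.sqrt 3 < 2 := (Real.sqrt_lt' two_pos).2 (by norm_num)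
  rw [lt_div_iff₀ (by positivity)]
  linarith

end Existence

end ThinFilm

/-- There is a number `n_h ∈ (3/2, 9/(3+√3))` such that for every `n ∈ (0, n_h)` the
oscillatory-component equation admits a nonconstant periodic solution of changing
sign. -/
theorem exists_heteroclinic_threshold :
    ∃ nh : ℝ, 3 / 2 < nh ∧ nh < 9 / (3 + Real.sqrt 3) ∧
      ∀ n : ℝ, n ∈ Set.Ioo (0 : ℝ) nh →
        ∃ (φ : ℝ → ℝ) (T : ℝ), 0 < T ∧ IsOscSol n φ ∧ Function.Periodic φ T ∧
          (∃ s, 0 < φ s) ∧ (∃ s, φ s < 0) := by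
  obtain ⟨θ, hθ, hdefect⟩ :=
    ThinFilm.exists_forall_matchingDefect_pos_of_le_neg_half (q := -(3 / 4)) (by norm_num)
      (by norm_num)
  have ha : 1 < (θ + 1) / θ := (one_lt_div hθ).2 (lt_add_one θ)
  have hlog : 0 < 1 / (4 * Real.log ((θ + 1) / θ)) := by
    have := Real.log_pos ha
    positivity
  refine ⟨min (7 / 4) (3 / 2 + 1 / (4 * Real.log ((θ + 1) / θ))),
    lt_min (by norm_num) (by linarith),
    (min_le_left _ _).trans_lt ThinFilm.seven_fourths_lt_nine_div, fun n ⟨hn₀, hn⟩ => ?_⟩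
  obtain ⟨hn₁, hn₂⟩ := lt_min_iff.1 hn
  rcases lt_or_ge n (3 / 2) with h | h
  · obtain ⟨θ', hθ', hpos⟩ :=
      ThinFilm.exists_matchingDefect_pos_of_neg_half_lt (p := 1 - n) (by linarith) (by linarith)
        (div_pos (by linarith) (by linarith) : 0 < (3 - 2 * n) / (3 - n))
    exact ThinFilm.exists_isOscSol_of_matchingDefect_pos hn₀ (by linarith) hθ' hpos
  · exact ThinFilm.exists_isOscSol_of_matchingDefect_pos hn₀ (by linarith) hθ fun g hg =>
      hdefect _ _ g (by linarith) (by linarith)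
        (ThinFilm.one_half_le_rpow ha (by linarith) hn₂.le) hg
end

section
/- Let n ∈ [3/2, 3), μ = 3/n, T > 0, and let φ : ℝ → ℝ be a continuous T-periodic function, not identically zero, whose zero set has Lebesgue measure zero. Let λ ∈ ℂ and let Y : ℝ → ℂ be T-periodic, of class C² with Y'' locally absolutely continuous, not identically zero, with ∫₀ᵀ |φ(s)|^{−n} |Y(s)|² ds < ∞, satisfying almost everywhere the linearised equation Y''' + 3(μ−1)Y'' + (3μ²−6μ+2)Y' + μ(μ−1)(μ−2)Y + (1−n)|φ(s)|^{−n} Y = λ Y. Then Re λ < 0. (Hence, if a periodic solution of the oscillatory-component equation persists for 3/2 ≤ n < 3, it is linearly stable and hyperbolic.) -/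
open MeasureTheory intervalIntegral

/-!
Suppose `Y''' + α Y'' + β Y' + q Y = z Y` with `α ≥ 0` and `q < 0`. Along `Y` the energy
`⟪Y, Y''⟫ - ‖Y'‖² / 2 + α ⟪Y, Y'⟫ + β ‖Y‖² / 2` has derivative `(Re z - q) ‖Y‖² + α ‖Y'‖²`.
Were `Re z ≥ 0`, the energy would be nondecreasing; being also periodic, it would be constant,
so its derivative would vanish and `Y` with it. Integrating the derivative of the energy over a
period gives the classical identity obtained by testing the equation against the conjugate of `Y`.
-/

open Set Filter
open scoped InnerProductSpace

section Periodic

variable {E : Type*} [NormedAddCommGroup E] [NormedSpace ℝ E] {f : ℝ → E} {T : ℝ}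

lemma periodic_deriv (hf : Function.Periodic f T) : Function.Periodic (deriv f) T := fun x ↦ by
  rw [← deriv_comp_add_const, funext hf]

/-- If `deriv f` were not integrable on `[a, b]`, then on every larger interval its integral would
take the junk value `0`. So `f` would agree at any two points on opposite sides of `[a, b]`, and
by periodicity would be constant. -/
lemma intervalIntegrable_deriv_of_periodic (hT : 0 < T) (hf : Function.Periodic f T)
    (hint : ∀ a b, f b - f a = ∫ s in a..b, deriv f s) (a b : ℝ) :
    IntervalIntegrable (deriv f) volume a b := by
  wlog hab : a ≤ b generalizing a b
  · exact (this b a (le_of_not_ge hab)).symm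
  by_contra hnot
  have hright (y : ℝ) (hy : b ≤ y) : f y = f a := by
    have hlarge : ¬ IntervalIntegrable (deriv f) volume a y := fun h ↦
      hnot <| h.mono_set <| uIcc_subset_uIcc_left <| by
        rw [uIcc_of_le (hab.trans hy)]
        exact ⟨hab, hy⟩
    rw [← sub_eq_zero, hint, integral_undef hlarge]
  have hconst (t : ℝ) : f t = f a := by
    obtain ⟨k, hk⟩ := exists_nat_ge ((b - t) / T)
    have hbt : b ≤ t + k * T := by
      rw [div_le_iff₀ hT] at hk
      linarith
    rw [← hf.nat_mul k t, hright _ hbt]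
  apply hnot
  rw [funext hconst]
  simp

end Periodic

section AbsolutelyContinuous

lemma absolutelyContinuousOnInterval_of_dist_le {X Z : Type*} [PseudoMetricSpace X]
    [PseudoMetricSpace Z] {f : ℝ → X} {g : ℝ → Z} {a b : ℝ}
    (hg : AbsolutelyContinuousOnInterval g a b)
    (hfg : ∀ x ∈ uIcc a b, ∀ y ∈ uIcc a b, dist (f x) (f y) ≤ dist (g x) (g y)) :
    AbsolutelyContinuousOnInterval f a b := by
  refine squeeze_zero' (.of_forall fun _ ↦ Finset.sum_nonneg fun _ _ ↦ dist_nonneg) ?_ hg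
  rw [eventually_inf_principal]
  refine .of_forall fun I hI ↦ Finset.sum_le_sum fun i hi ↦ ?_
  exact hfg _ (hI.1 i hi).1 _ (hI.1 i hi).2

lemma absolutelyContinuousOnInterval_norm_sq {E : Type*} [SeminormedAddCommGroup E]
    {f : ℝ → E} {a b : ℝ} (hf : AbsolutelyContinuousOnInterval f a b) :
    AbsolutelyContinuousOnInterval (fun t ↦ ‖f t‖ ^ 2) a b := by
  have hnorm : AbsolutelyContinuousOnInterval (fun t ↦ ‖f t‖) a b :=
    absolutelyContinuousOnInterval_of_dist_le hf fun x _ y _ ↦ by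
      simpa only [dist_eq_norm (f x)] using dist_norm_norm_le (f x) (f y)
  simpa only [sq] using hnorm.fun_mul hnorm

lemma absolutelyContinuousOnInterval_inner {E : Type*} [NormedAddCommGroup E]
    [InnerProductSpace ℝ E] {f g : ℝ → E} {a b : ℝ} (hf : AbsolutelyContinuousOnInterval f a b)
    (hg : AbsolutelyContinuousOnInterval g a b) :
    AbsolutelyContinuousOnInterval (fun t ↦ ⟪f t, g t⟫_ℝ) a b := by
  have hpolar (t : ℝ) :
      ⟪f t, g t⟫_ℝ = 1 / 2 * (‖f t + g t‖ ^ 2 - ‖f t‖ ^ 2 - ‖g t‖ ^ 2) := by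
    rw [norm_add_sq_real]
    ring
  simp only [hpolar]
  exact (((absolutelyContinuousOnInterval_norm_sq (hf.fun_add hg)).fun_sub
    (absolutelyContinuousOnInterval_norm_sq hf)).fun_sub
    (absolutelyContinuousOnInterval_norm_sq hg)).const_mul (1 / 2)

lemma absolutelyContinuousOnInterval_of_sub_eq_integral {E : Type*} [NormedAddCommGroup E]
    [NormedSpace ℝ E] {f g : ℝ → E} {a b : ℝ} (hg : IntervalIntegrable g volume a b)
    (hfg : ∀ x ∈ uIcc a b, ∀ y ∈ uIcc a b, f y - f x = ∫ s in x..y, g s) :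
    AbsolutelyContinuousOnInterval f a b := by
  refine absolutelyContinuousOnInterval_of_dist_le
    (hg.norm.absolutelyContinuousOnInterval_intervalIntegral left_mem_uIcc)
    fun x hx y hy ↦ ?_
  have hax := hg.norm.mono_set (uIcc_subset_uIcc_left hx)
  have hay := hg.norm.mono_set (uIcc_subset_uIcc_left hy)
  calc dist (f x) (f y) = ‖∫ s in y..x, g s‖ := by rw [dist_eq_norm, hfg y hy x hx]
    _ ≤ |∫ s in y..x, ‖g s‖| := norm_integral_le_abs_integral_norm
    _ = dist (∫ s in a..x, ‖g s‖) (∫ s in a..y, ‖g s‖) := by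
      rw [Real.dist_eq, integral_interval_sub_left hax hay]

lemma locallyIntegrable_of_forall_intervalIntegrable {E : Type*} [NormedAddCommGroup E]
    {f : ℝ → E} (hf : ∀ a b, IntervalIntegrable f volume a b) : LocallyIntegrable f := fun x ↦
  ⟨Ioc (x - 1) (x + 1), Ioc_mem_nhds (by linarith) (by linarith), (hf _ _).1⟩

lemma ae_hasDerivAt_of_sub_eq_integral {E : Type*} [NormedAddCommGroup E] [NormedSpace ℝ E]
    [CompleteSpace E] {f g : ℝ → E} (hg : LocallyIntegrable g)
    (hfg : ∀ a b, f b - f a = ∫ s in a..b, g s) : ∀ᵐ t, HasDerivAt f (g t) t := by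
  have hf : f = fun t ↦ (∫ s in (0 : ℝ)..t, g s) + f 0 := by
    funext t
    rw [← hfg, sub_add_cancel]
  filter_upwards [_root_.LocallyIntegrable.ae_hasDerivAt_integral hg] with t ht
  rw [hf]
  exact (ht 0).add_const (f 0)

lemma ae_deriv_eq_zero_of_nonneg_of_eq {f : ℝ → ℝ} {a b : ℝ} (hab : a ≤ b)
    (hf : AbsolutelyContinuousOnInterval f a b) (heq : f a = f b)
    (hnonneg : 0 ≤ᵐ[volume.restrict (Ioc a b)] deriv f) :
    deriv f =ᵐ[volume.restrict (Ioc a b)] 0 := by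
  refine (integral_eq_zero_iff_of_le_of_nonneg_ae hab hnonneg hf.intervalIntegrable_deriv).mp ?_
  rw [hf.integral_deriv_eq_sub, heq, sub_self]

end AbsolutelyContinuous

section Energy

variable {E : Type*} [NormedAddCommGroup E] [InnerProductSpace ℝ E] {Y : ℝ → E}

/-- The energy of a curve `Y` for the operator `Y ↦ Y''' + α Y'' + β Y'`, chosen so that its
derivative is `⟪Y, Y''' + α Y'' + β Y'⟫ + α ‖Y'‖²`. -/
noncomputable def energy (α β : ℝ) (Y : ℝ → E) (t : ℝ) : ℝ :=
  ⟪Y t, deriv (deriv Y) t⟫_ℝ - 1 / 2 * ‖deriv Y t‖ ^ 2 + α * ⟪Y t, deriv Y t⟫_ℝ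
    + β / 2 * ‖Y t‖ ^ 2

lemma energy_periodic (α β : ℝ) {T : ℝ} (hY : Function.Periodic Y T) :
    Function.Periodic (energy α β Y) T := fun t ↦ by
  simp only [energy, hY t, periodic_deriv hY t, periodic_deriv (periodic_deriv hY) t]

lemma hasDerivAt_energy (α β : ℝ) {t : ℝ} (hY : DifferentiableAt ℝ Y t)
    (hY' : DifferentiableAt ℝ (deriv Y) t) (hY'' : DifferentiableAt ℝ (deriv (deriv Y)) t) :
    HasDerivAt (energy α β Y)
      (⟪Y t, deriv (deriv (deriv Y)) t + α • deriv (deriv Y) t + β • deriv Y t⟫_ℝ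
        + α * ‖deriv Y t‖ ^ 2) t := by
  have h := (((hY.hasDerivAt.inner ℝ hY''.hasDerivAt).sub
    (hY'.hasDerivAt.norm_sq.const_mul (1 / 2))).add
    ((hY.hasDerivAt.inner ℝ hY'.hasDerivAt).const_mul α)).add
    (hY.hasDerivAt.norm_sq.const_mul (β / 2))
  refine h.congr_deriv ?_
  simp only [inner_add_right, real_inner_smul_right, real_inner_self_eq_norm_sq]
  ring

lemma ae_deriv_energy (α β : ℝ) (hY : ContDiff ℝ 2 Y)
    (hY'' : ∀ᵐ t, DifferentiableAt ℝ (deriv (deriv Y)) t) :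
    ∀ᵐ t, deriv (energy α β Y) t
      = ⟪Y t, deriv (deriv (deriv Y)) t + α • deriv (deriv Y) t + β • deriv Y t⟫_ℝ
        + α * ‖deriv Y t‖ ^ 2 :=
  hY''.mono fun t ht ↦ (hasDerivAt_energy α β (hY.differentiable two_ne_zero t)
    (hY.differentiable_deriv_two t) ht).deriv

lemma absolutelyContinuousOnInterval_energy (α β : ℝ) {a b : ℝ} (hY : ContDiff ℝ 2 Y)
    (hY'' : AbsolutelyContinuousOnInterval (deriv (deriv Y)) a b) :
    AbsolutelyContinuousOnInterval (energy α β Y) a b := by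
  have h₀ : AbsolutelyContinuousOnInterval Y a b :=
    (hY.of_le one_le_two).contDiffOn.absolutelyContinuousOnInterval
  have h₁ : AbsolutelyContinuousOnInterval (deriv Y) a b :=
    hY.deriv'.contDiffOn.absolutelyContinuousOnInterval
  exact (((absolutelyContinuousOnInterval_inner h₀ hY'').fun_sub
    ((absolutelyContinuousOnInterval_norm_sq h₁).const_mul (1 / 2))).fun_add
    ((absolutelyContinuousOnInterval_inner h₀ h₁).const_mul α)).fun_add
    ((absolutelyContinuousOnInterval_norm_sq h₀).const_mul (β / 2))

theorem eq_zero_of_periodic_of_inner_pos [CompleteSpace E] {α β T : ℝ} (hα : 0 ≤ α) (hT : 0 < T)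
    (hYper : Function.Periodic Y T) (hYreg : ContDiff ℝ 2 Y)
    (hYAC : ∀ a b, deriv (deriv Y) b - deriv (deriv Y) a
      = ∫ s in a..b, deriv (deriv (deriv Y)) s)
    (hpos : ∀ᵐ t, Y t ≠ 0 →
      0 < ⟪Y t, deriv (deriv (deriv Y)) t + α • deriv (deriv Y) t + β • deriv Y t⟫_ℝ) :
    Y = 0 := by
  have hthird := intervalIntegrable_deriv_of_periodic hT
    (periodic_deriv (periodic_deriv hYper)) hYAC
  have hAC (a b : ℝ) : AbsolutelyContinuousOnInterval (energy α β Y) a b :=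
    absolutelyContinuousOnInterval_energy α β hYreg <|
      absolutelyContinuousOnInterval_of_sub_eq_integral (hthird a b) fun x _ y _ ↦ hYAC x y
  have hderiv := ae_deriv_energy α β hYreg <|
    (ae_hasDerivAt_of_sub_eq_integral
      (locallyIntegrable_of_forall_intervalIntegrable hthird) hYAC).mono
      fun _ h ↦ h.differentiableAt
  have hderiv_pos : ∀ᵐ t, Y t ≠ 0 → 0 < deriv (energy α β Y) t := by
    filter_upwards [hderiv, hpos] with t ht hpost hYt
    have hinner := hpost hYt
    rw [ht]
    positivity
  have hderiv_nonneg : ∀ᵐ t, 0 ≤ deriv (energy α β Y) t := by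
    filter_upwards [hderiv, hderiv_pos] with t ht hpost
    by_cases hYt : Y t = 0
    · rw [ht, hYt, inner_zero_left]
      positivity
    · exact (hpost hYt).le
  funext s
  have hstationary : deriv (energy α β Y) =ᵐ[volume.restrict (Ioc (s - T) s)] 0 :=
    ae_deriv_eq_zero_of_nonneg_of_eq (sub_le_self s hT.le) (hAC _ _)
      ((energy_periodic α β hYper).sub_eq s) (ae_restrict_of_ae hderiv_nonneg)
  have hYzero : Y =ᵐ[volume.restrict (Ioc (s - T) s)] 0 := by
    filter_upwards [hstationary, ae_restrict_of_ae hderiv_pos] with t ht hpost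
    by_contra hYt
    exact (hpost hYt).ne' ht
  exact Measure.eqOn_Ioc_of_ae_eq volume hYzero hYreg.continuous.continuousOn
    continuousOn_const ⟨sub_lt_self s hT, le_rfl⟩

end Energy

theorem periodic_orbit_linearisation_stable_general {E : Type*} [NormedAddCommGroup E]
    [InnerProductSpace ℂ E] [CompleteSpace E] {α β T : ℝ} {q : ℝ → ℝ} {z : ℂ} {Y : ℝ → E}
    (hα : 0 ≤ α) (hq : ∀ᵐ s, q s < 0) (hT : 0 < T)
    (hYper : Function.Periodic Y T) (hYreg : ContDiff ℝ 2 Y)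
    (hYAC : ∀ a b, deriv (deriv Y) b - deriv (deriv Y) a
      = ∫ s in a..b, deriv (deriv (deriv Y)) s)
    (hYne : ∃ s, Y s ≠ 0)
    (heq : ∀ᵐ s, deriv (deriv (deriv Y)) s + α • deriv (deriv Y) s + β • deriv Y s + q s • Y s
      = z • Y s) :
    z.re < 0 := by
  let : InnerProductSpace ℝ E := InnerProductSpace.complexToReal
  by_contra! hz
  obtain ⟨s, hs⟩ := hYne
  refine hs (congrFun (eq_zero_of_periodic_of_inner_pos (β := β) hα hT hYper hYreg hYAC ?_) s)
  filter_upwards [heq, hq] with t ht hqt hYt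
  have hinner : ⟪Y t, z • Y t - q t • Y t⟫_ℝ = (z.re - q t) * ‖Y t‖ ^ 2 := by
    rw [← Complex.coe_smul, ← sub_smul, real_inner_eq_re_inner ℂ, inner_smul_right,
      inner_self_eq_norm_sq_to_K, ← RCLike.ofReal_pow, RCLike.re_mul_ofReal]
    simp
  rw [eq_sub_of_add_eq ht, hinner]
  have hgap : 0 < z.re - q t := by linarith
  positivity

lemma oscillatory_potential_neg {n μ w : ℝ} (hn : 1 < n) (hμ : μ ∈ Icc 1 2) (hw : 0 < w) :
    μ * (μ - 1) * (μ - 2) + (1 - n) * w < 0 := by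
  have hconst : μ * (μ - 1) * (μ - 2) ≤ 0 :=
    mul_nonpos_of_nonneg_of_nonpos (mul_nonneg (by linarith [hμ.1]) (by linarith [hμ.1]))
      (by linarith [hμ.2])
  have hsing : (1 - n) * w < 0 := mul_neg_of_neg_of_pos (by linarith) hw
  linarith

/-- Linear stability and hyperbolicity of periodic orbits of the
oscillatory-component equation for `n ∈ [3/2, 3)`: any periodic eigenfunction `Y`
of the linearisation about a periodic `φ` with spectral parameter `λ` forces
`Re λ < 0`. -/
theorem periodic_orbit_linearisation_stable
    (n μ T : ℝ) (hn : n ∈ Set.Ico (3 / 2 : ℝ) 3) (hμ : μ = 3 / n) (hT : 0 < T)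
    (φ : ℝ → ℝ) (hφc : Continuous φ) (hφper : Function.Periodic φ T)
    (hφne : ∃ s, φ s ≠ 0)
    (hφzero : volume {s : ℝ | φ s = 0} = 0)
    (lam : ℂ) (Y : ℝ → ℂ) (hYper : Function.Periodic Y T)
    (hYreg : ContDiff ℝ 2 Y)
    (hYAC : ∀ a b : ℝ, deriv (deriv Y) b - deriv (deriv Y) a
      = ∫ s in a..b, deriv (deriv (deriv Y)) s)
    (hYne : ∃ s, Y s ≠ 0)
    (hint : IntegrableOn (fun s => |φ s| ^ (-n) * ‖Y s‖ ^ 2) (Set.Ioc 0 T))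
    (heq : ∀ᵐ s : ℝ ∂volume,
      deriv (deriv (deriv Y)) s
        + (3 * (μ - 1) : ℝ) * deriv (deriv Y) s
        + ((3 * μ ^ 2 - 6 * μ + 2 : ℝ) : ℂ) * deriv Y s
        + ((μ * (μ - 1) * (μ - 2) : ℝ) : ℂ) * Y s
        + (((1 - n) * |φ s| ^ (-n) : ℝ) : ℂ) * Y s = lam * Y s) :
    lam.re < 0 := by
  obtain ⟨hn₁, hn₂⟩ := hn
  have hμ₁ : 1 < μ := by rw [hμ, lt_div_iff₀ (by linarith)]; linarith
  have hμ₂ : μ ≤ 2 := by rw [hμ, div_le_iff₀ (by linarith)]; linarith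
  have hφae : ∀ᵐ s, φ s ≠ 0 := by simpa [ae_iff] using hφzero
  refine periodic_orbit_linearisation_stable_general (α := 3 * (μ - 1))
    (β := 3 * μ ^ 2 - 6 * μ + 2)
    (q := fun s ↦ μ * (μ - 1) * (μ - 2) + (1 - n) * |φ s| ^ (-n))
    (by linarith) ?_ hT hYper hYreg hYAC hYne ?_
  · filter_upwards [hφae] with s hs
    exact oscillatory_potential_neg (by linarith) ⟨hμ₁.le, hμ₂⟩
      (Real.rpow_pos_of_pos (abs_pos.mpr hs) _)
  · filter_upwards [heq] with s hs
    simpa only [Complex.real_smul, smul_eq_mul, Complex.ofReal_add, add_mul, add_assoc] using hs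
end
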